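/- arXiv:1812.01413 — 7 statements merged into one kernel-verified Lean document; each statement's English description precedes it below -/
import Mathlib

section
/- Let Ω ⊆ ℝ² be open with coordinates (x,t) and let u, v, w : Ω → ℝ be smooth. Define the 3×3 matrix-valued functions M = [[0,1,0],[u_xx, v_xx, w_xx],[u_xt, v_xt, w_xt]] and N = [[0,0,1],[u_xt, v_xt, w_xt],[u_tt, v_tt, w_tt]]. Then M·N = N·M at every point of Ω if and only if (u,v,w) satisfies the Oriented Associativity system on Ω. (This is the zero-curvature content of the Lax pair ψ_x = λMψ, ψ_t = λNψ, since ∂_t M = ∂_x N holds automatically by equality of mixed partial derivatives.) -/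
/-- Partial derivative with respect to the first coordinate `x` of `ℝ × ℝ`. -/
noncomputable def pdx (f : ℝ × ℝ → ℝ) (p : ℝ × ℝ) : ℝ := fderiv ℝ f p (1, 0)

/-- Partial derivative with respect to the second coordinate `t` of `ℝ × ℝ`. -/
noncomputable def pdt (f : ℝ × ℝ → ℝ) (p : ℝ × ℝ) : ℝ := fderiv ℝ f p (0, 1)

/-! Write `K = ⁅M, N⁆`. The first rows of `M` and `N` are basis vectors `e₁` and `e₂`, and the third
row of `M` is the second row of `N`, so the first row of `K` vanishes. Since `tr K = 0`, the lower
right `2 × 2` block of `K` carries only three equations, and these are the three equations of the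
system. Once that block vanishes, the identities `tr (M * K) = 0` and `tr (N * K) = 0` say exactly
that the two remaining entries of the first column of `K` are zero. -/

section Semiring

variable {ι R : Type*} [Fintype ι] [DecidableEq ι] [NonAssocSemiring R] {A : Matrix ι ι R} {i j : ι}

theorem mul_row_of_row_eq_single (hA : A.row i = Pi.single j 1) (B : Matrix ι ι R) :
    (A * B).row i = B.row j :=
  calc (A * B).row i = Matrix.vecMul (A.row i) B := Matrix.mul_apply_eq_vecMul A B i
    _ = B.row j := by rw [hA, Matrix.single_one_vecMul]

theorem trace_mul_eq_apply_of_row_eq_single {K : Matrix ι ι R} (hA : A.row i = Pi.single j 1)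
    (hK : ∀ r s, s ≠ i → K r s = 0) : (A * K).trace = K j i := by
  have hdiag : ∀ s, s ≠ i → (A * K).diag s = 0 := fun s hs => by
    simp only [Matrix.diag_apply, Matrix.mul_apply, hK _ s hs, mul_zero, Finset.sum_const_zero]
  calc (A * K).trace = (A * K).diag i := Fintype.sum_eq_single i hdiag
    _ = K j i := congrFun (mul_row_of_row_eq_single hA K) i

end Semiring

theorem lie_row_eq_zero_of_rows_eq_single {ι R : Type*} [Fintype ι] [DecidableEq ι]
    [NonAssocRing R] {A B : Matrix ι ι R} {i j k : ι} (hA : A.row i = Pi.single j 1)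
    (hB : B.row i = Pi.single k 1) (hAB : A.row k = B.row j) : ⁅A, B⁆.row i = 0 :=
  calc ⁅A, B⁆.row i = (A * B).row i - (B * A).row i := rfl
    _ = 0 := by rw [mul_row_of_row_eq_single hA, mul_row_of_row_eq_single hB, hAB, sub_self]

theorem lie_apply_fin_three {R : Type*} [NonAssocRing R] (A B : Matrix (Fin 3) (Fin 3) R)
    (i j : Fin 3) :
    ⁅A, B⁆ i j = A i 0 * B 0 j + A i 1 * B 1 j + A i 2 * B 2 j -
      (B i 0 * A 0 j + B i 1 * A 1 j + B i 2 * A 2 j) := by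
  simp only [Ring.lie_def, Matrix.sub_apply, Matrix.mul_apply, Fin.sum_univ_three]

section CommRing

variable {R : Type*} [CommRing R]

section Trace

variable {ι : Type*} [Fintype ι] (A B : Matrix ι ι R)

theorem trace_left_mul_lie : (A * ⁅A, B⁆).trace = 0 := by
  classical
  have h : A * ⁅A, B⁆ = ⁅A, A * B⁆ := by
    simp only [Ring.lie_def, mul_sub, mul_assoc]
  rw [h, LieAlgebra.matrix_trace_commutator_zero]

theorem trace_right_mul_lie : (B * ⁅A, B⁆).trace = 0 := by
  classical
  have h : B * ⁅A, B⁆ = ⁅B * A, B⁆ := by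
    simp only [Ring.lie_def, mul_sub, mul_assoc]
  rw [h, LieAlgebra.matrix_trace_commutator_zero]

end Trace

theorem lie_eq_zero_iff_of_rows {A B : Matrix (Fin 3) (Fin 3) R}
    (hA : A.row 0 = Pi.single 1 1) (hB : B.row 0 = Pi.single 2 1) (hAB : A.row 2 = B.row 1) :
    ⁅A, B⁆ = 0 ↔ ⁅A, B⁆ 1 2 = 0 ∧ ⁅A, B⁆ 1 1 = 0 ∧ ⁅A, B⁆ 2 1 = 0 := by
  refine ⟨fun h => by simp only [h, Matrix.zero_apply, and_self], fun ⟨h12, h11, h21⟩ => ?_⟩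
  have hrow : ∀ s, ⁅A, B⁆ 0 s = 0 := congrFun (lie_row_eq_zero_of_rows_eq_single hA hB hAB)
  have h22 : ⁅A, B⁆ 2 2 = 0 := by
    simpa only [Matrix.trace_fin_three, hrow, h11, zero_add] using
      LieAlgebra.matrix_trace_commutator_zero (Fin 3) R A B
  have hcol : ∀ r s, s ≠ 0 → ⁅A, B⁆ r s = 0 := by
    simp [Fin.forall_fin_succ, hrow, h11, h12, h21, h22]
  have h10 : ⁅A, B⁆ 1 0 = 0 :=
    (trace_mul_eq_apply_of_row_eq_single hA hcol).symm.trans (trace_left_mul_lie A B)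
  have h20 : ⁅A, B⁆ 2 0 = 0 :=
    (trace_mul_eq_apply_of_row_eq_single hB hcol).symm.trans (trace_right_mul_lie A B)
  ext r s
  fin_cases r <;> fin_cases s <;> first | assumption | exact hrow _

theorem statement0_general (uxx uxt utt vxx vxt vtt wxx wxt wtt : R) :
    !![0, 1, 0; uxx, vxx, wxx; uxt, vxt, wxt] * !![0, 0, 1; uxt, vxt, wxt; utt, vtt, wtt] =
        !![0, 0, 1; uxt, vxt, wxt; utt, vtt, wtt] * !![0, 1, 0; uxx, vxx, wxx; uxt, vxt, wxt] ↔
      uxx = vxt * wxx - vxx * wxt + wxt ^ 2 - wxx * wtt ∧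
      uxt = vtt * wxx - vxt * wxt ∧
      utt = vxt ^ 2 - vxx * vtt + vtt * wxt - vxt * wtt := by
  set M := !![0, 1, 0; uxx, vxx, wxx; uxt, vxt, wxt]
  set N := !![0, 0, 1; uxt, vxt, wxt; utt, vtt, wtt]
  have hM0 : M.row 0 = Pi.single 1 1 := by ext s; fin_cases s <;> rfl
  have hN0 : N.row 0 = Pi.single 2 1 := by ext s; fin_cases s <;> rfl
  have h12 : ⁅M, N⁆ 1 2 = uxx - (vxt * wxx - vxx * wxt + wxt ^ 2 - wxx * wtt) :=
    calc ⁅M, N⁆ 1 2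
        = uxx * 1 + vxx * wxt + wxx * wtt - (uxt * 0 + vxt * wxx + wxt * wxt) :=
          lie_apply_fin_three M N 1 2
      _ = _ := by ring
  have h11 : ⁅M, N⁆ 1 1 = -(uxt - (vtt * wxx - vxt * wxt)) :=
    calc ⁅M, N⁆ 1 1
        = uxx * 0 + vxx * vxt + wxx * vtt - (uxt * 1 + vxt * vxx + wxt * vxt) :=
          lie_apply_fin_three M N 1 1
      _ = _ := by ring
  have h21 : ⁅M, N⁆ 2 1 = -(utt - (vxt ^ 2 - vxx * vtt + vtt * wxt - vxt * wtt)) :=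
    calc ⁅M, N⁆ 2 1
        = uxt * 0 + vxt * vxt + wxt * vtt - (utt * 1 + vtt * vxx + wtt * vxt) :=
          lie_apply_fin_three M N 2 1
      _ = _ := by ring
  rw [← sub_eq_zero, ← Ring.lie_def, lie_eq_zero_iff_of_rows hM0 hN0 rfl, h12, h11, h21]
  simp only [neg_eq_zero, sub_eq_zero]

end CommRing

/-- for smooth `u, v, w` on an open set `Ω ⊆ ℝ²`, the Lax matrices
`M = [[0,1,0],[u_xx,v_xx,w_xx],[u_xt,v_xt,w_xt]]` and
`N = [[0,0,1],[u_xt,v_xt,w_xt],[u_tt,v_tt,w_tt]]` commute at every point of `Ω`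
if and only if `(u,v,w)` satisfies the Oriented Associativity system on `Ω`. -/
theorem statement0 (Ω : Set (ℝ × ℝ)) (hΩ : IsOpen Ω)
    (u v w : ℝ × ℝ → ℝ)
    (hu : ContDiffOn ℝ (⊤ : ℕ∞) u Ω) (hv : ContDiffOn ℝ (⊤ : ℕ∞) v Ω) (hw : ContDiffOn ℝ (⊤ : ℕ∞) w Ω)
    (M N : (ℝ × ℝ) → Matrix (Fin 3) (Fin 3) ℝ)
    (hM : ∀ p, M p = !![0, 1, 0;
                        pdx (pdx u) p, pdx (pdx v) p, pdx (pdx w) p;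
                        pdt (pdx u) p, pdt (pdx v) p, pdt (pdx w) p])
    (hN : ∀ p, N p = !![0, 0, 1;
                        pdt (pdx u) p, pdt (pdx v) p, pdt (pdx w) p;
                        pdt (pdt u) p, pdt (pdt v) p, pdt (pdt w) p]) :
    (∀ p ∈ Ω, M p * N p = N p * M p) ↔
    (∀ p ∈ Ω,
      pdx (pdx u) p = pdt (pdx v) p * pdx (pdx w) p - pdx (pdx v) p * pdt (pdx w) p
        + (pdt (pdx w) p) ^ 2 - pdx (pdx w) p * pdt (pdt w) p ∧
      pdt (pdx u) p = pdt (pdt v) p * pdx (pdx w) p - pdt (pdx v) p * pdt (pdx w) p ∧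
      pdt (pdt u) p = (pdt (pdx v) p) ^ 2 - pdx (pdx v) p * pdt (pdt v) p
        + pdt (pdt v) p * pdt (pdx w) p - pdt (pdx v) p * pdt (pdt w) p) := by
  refine forall₂_congr fun p _ => ?_
  rw [hM, hN]
  exact statement0_general ..
end

section
/- Let Ω ⊆ ℝ² be open and let u, v, w : Ω → ℝ be smooth functions satisfying the Oriented Associativity system on Ω, with w_xx nowhere zero on Ω. Then the six functions q¹ = u_xx, q² = u_xt, q³ = v_xx, q⁴ = v_xt, q⁵ = w_xx, q⁶ = w_xt satisfy the hydrodynamic-type system of conservation laws: q¹_t = q²_x; q²_t = ∂_x[(q²q⁶ + q¹q⁴ − q²q³)/q⁵]; q³_t = q⁴_x; q⁴_t = ∂_x[(q² + q⁴q⁶)/q⁵]; q⁵_t = q⁶_x; q⁶_t = ∂_x[((q⁶)² − q³q⁶ + q⁴q⁵ − q¹)/q⁵]. -/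
/-!
Since partial derivatives commute, every `C³` function `f` satisfies `(f_xx)_t = (f_xt)_x` and
`(f_xt)_t = (f_tt)_x`. Three of the conservation laws are instances of the first identity. For the
other three, the system is solved for `u_tt`, `v_tt` and `w_tt` in terms of the `qⁱ`: where
`w_xx ≠ 0`, the equation for `u_xt` is linear in `v_tt` and the equation for `u_xx` is linear in
`w_tt`, and substituting both into the equation for `u_tt` gives the remaining flux.
-/

open Filter Topology

section MixedPartials

theorem fderiv_fderiv_apply_comm {𝕜 E F : Type*} [NontriviallyNormedField 𝕜]
    [NormedAddCommGroup E] [NormedSpace 𝕜 E] [NormedAddCommGroup F] [NormedSpace 𝕜 F]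
    {f : E → F} {x : E} (hf : DifferentiableAt 𝕜 (fderiv 𝕜 f) x)
    (hsymm : IsSymmSndFDerivAt 𝕜 f x) (a b : E) :
    fderiv 𝕜 (fun y ↦ fderiv 𝕜 f y a) x b = fderiv 𝕜 (fun y ↦ fderiv 𝕜 f y b) x a := by
  have hsnd (c d : E) :
      fderiv 𝕜 (fun y ↦ fderiv 𝕜 f y c) x d = fderiv 𝕜 (fderiv 𝕜 f) x d c := by
    simp [fderiv_clm_apply hf (differentiableAt_const c)]
  rw [hsnd, hsnd, hsymm.eq]

variable {f g : ℝ × ℝ → ℝ} {p : ℝ × ℝ} {m n : WithTop ℕ∞}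

theorem contDiffAt_pdx (hf : ContDiffAt ℝ n f p) (hmn : m + 1 ≤ n) : ContDiffAt ℝ m (pdx f) p :=
  (hf.fderiv_right hmn).clm_apply contDiffAt_const

theorem contDiffAt_pdt (hf : ContDiffAt ℝ n f p) (hmn : m + 1 ≤ n) : ContDiffAt ℝ m (pdt f) p :=
  (hf.fderiv_right hmn).clm_apply contDiffAt_const

theorem pdx_congr (h : f =ᶠ[𝓝 p] g) : pdx f p = pdx g p := by
  rw [pdx, pdx, h.fderiv_eq]

theorem pdt_congr (h : f =ᶠ[𝓝 p] g) : pdt f p = pdt g p := by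
  rw [pdt, pdt, h.fderiv_eq]

theorem pdt_pdx_comm (hf : ContDiffAt ℝ 2 f p) : pdt (pdx f) p = pdx (pdt f) p :=
  fderiv_fderiv_apply_comm ((hf.fderiv_right one_add_one_eq_two.le).differentiableAt one_ne_zero)
    (hf.isSymmSndFDerivAt (by simp)) (1, 0) (0, 1)

theorem pdt_pdx_pdx_comm (hf : ContDiffAt ℝ 3 f p) :
    pdt (pdx (pdx f)) p = pdx (pdt (pdx f)) p :=
  pdt_pdx_comm (contDiffAt_pdx hf two_add_one_eq_three.le)

theorem pdt_pdt_pdx_comm (hf : ContDiffAt ℝ 3 f p) :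
    pdt (pdt (pdx f)) p = pdx (pdt (pdt f)) p := by
  have hcomm : pdt (pdx f) =ᶠ[𝓝 p] pdx (pdt f) :=
    (hf.eventually (by simp)).mono fun _ hz ↦ pdt_pdx_comm (hz.of_le (by norm_num))
  calc
    pdt (pdt (pdx f)) p = pdt (pdx (pdt f)) p := pdt_congr hcomm
    _ = pdx (pdt (pdt f)) p := pdt_pdx_comm (contDiffAt_pdt hf two_add_one_eq_three.le)

end MixedPartials

/-- The Oriented Associativity system (case `N = 3`) at the point `p`. The mixed derivative `f_xt`
is encoded as `pdt (pdx f)`, differentiating in `x` first. -/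
structure OrientedAssociativityAt (u v w : ℝ × ℝ → ℝ) (p : ℝ × ℝ) : Prop where
  u_xx_eq : pdx (pdx u) p = pdt (pdx v) p * pdx (pdx w) p - pdx (pdx v) p * pdt (pdx w) p
    + (pdt (pdx w) p) ^ 2 - pdx (pdx w) p * pdt (pdt w) p
  u_xt_eq : pdt (pdx u) p = pdt (pdt v) p * pdx (pdx w) p - pdt (pdx v) p * pdt (pdx w) p
  u_tt_eq : pdt (pdt u) p = (pdt (pdx v) p) ^ 2 - pdx (pdx v) p * pdt (pdt v) p
    + pdt (pdt v) p * pdt (pdx w) p - pdt (pdx v) p * pdt (pdt w) p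

namespace OrientedAssociativityAt

variable {u v w : ℝ × ℝ → ℝ} {p : ℝ × ℝ}

theorem v_tt_eq_div (h : OrientedAssociativityAt u v w p) (hw : pdx (pdx w) p ≠ 0) :
    pdt (pdt v) p = (pdt (pdx u) p + pdt (pdx v) p * pdt (pdx w) p) / pdx (pdx w) p := by
  rw [eq_div_iff hw]
  linear_combination -h.u_xt_eq

theorem w_tt_eq_div (h : OrientedAssociativityAt u v w p) (hw : pdx (pdx w) p ≠ 0) :
    pdt (pdt w) p = ((pdt (pdx w) p) ^ 2 - pdx (pdx v) p * pdt (pdx w) p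
      + pdt (pdx v) p * pdx (pdx w) p - pdx (pdx u) p) / pdx (pdx w) p := by
  rw [eq_div_iff hw]
  linear_combination h.u_xx_eq

theorem u_tt_eq_div (h : OrientedAssociativityAt u v w p) (hw : pdx (pdx w) p ≠ 0) :
    pdt (pdt u) p = (pdt (pdx u) p * pdt (pdx w) p + pdx (pdx u) p * pdt (pdx v) p
      - pdt (pdx u) p * pdx (pdx v) p) / pdx (pdx w) p := by
  rw [h.u_tt_eq, h.v_tt_eq_div hw, h.w_tt_eq_div hw]
  field_simp
  ring

end OrientedAssociativityAt

theorem statement1_general {Ω : Set (ℝ × ℝ)} (hΩ : IsOpen Ω)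
    {u v w : ℝ × ℝ → ℝ}
    (hu : ContDiffOn ℝ 3 u Ω) (hv : ContDiffOn ℝ 3 v Ω) (hw : ContDiffOn ℝ 3 w Ω)
    (hOA : ∀ p ∈ Ω, OrientedAssociativityAt u v w p)
    (hwxx : ∀ p ∈ Ω, pdx (pdx w) p ≠ 0)
    {q1 q2 q3 q4 q5 q6 : ℝ × ℝ → ℝ}
    (hq1 : q1 = pdx (pdx u)) (hq2 : q2 = pdt (pdx u))
    (hq3 : q3 = pdx (pdx v)) (hq4 : q4 = pdt (pdx v))
    (hq5 : q5 = pdx (pdx w)) (hq6 : q6 = pdt (pdx w)) :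
    ∀ p ∈ Ω,
      pdt q1 p = pdx q2 p ∧
      pdt q2 p = pdx (fun z => (q2 z * q6 z + q1 z * q4 z - q2 z * q3 z) / q5 z) p ∧
      pdt q3 p = pdx q4 p ∧
      pdt q4 p = pdx (fun z => (q2 z + q4 z * q6 z) / q5 z) p ∧
      pdt q5 p = pdx q6 p ∧
      pdt q6 p = pdx (fun z => ((q6 z) ^ 2 - q3 z * q6 z + q4 z * q5 z - q1 z) / q5 z) p := by
  subst hq1 hq2 hq3 hq4 hq5 hq6
  intro p hp
  have hΩp : Ω ∈ 𝓝 p := hΩ.mem_nhds hp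
  have hup : ContDiffAt ℝ 3 u p := hu.contDiffAt hΩp
  have hvp : ContDiffAt ℝ 3 v p := hv.contDiffAt hΩp
  have hwp : ContDiffAt ℝ 3 w p := hw.contDiffAt hΩp
  refine ⟨pdt_pdx_pdx_comm hup, (pdt_pdt_pdx_comm hup).trans (pdx_congr ?_),
    pdt_pdx_pdx_comm hvp, (pdt_pdt_pdx_comm hvp).trans (pdx_congr ?_),
    pdt_pdx_pdx_comm hwp, (pdt_pdt_pdx_comm hwp).trans (pdx_congr ?_)⟩
  · exact eventually_of_mem hΩp fun z hz ↦ (hOA z hz).u_tt_eq_div (hwxx z hz)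
  · exact eventually_of_mem hΩp fun z hz ↦ (hOA z hz).v_tt_eq_div (hwxx z hz)
  · exact eventually_of_mem hΩp fun z hz ↦ (hOA z hz).w_tt_eq_div (hwxx z hz)

/-- if smooth `u, v, w` satisfy the Oriented Associativity system on an
open `Ω ⊆ ℝ²` and `w_xx` is nowhere zero on `Ω`, then
`q¹ = u_xx, q² = u_xt, q³ = v_xx, q⁴ = v_xt, q⁵ = w_xx, q⁶ = w_xt` satisfy the
hydrodynamic-type system of conservation laws (six). -/
theorem statement1 (Ω : Set (ℝ × ℝ)) (hΩ : IsOpen Ω)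
    (u v w : ℝ × ℝ → ℝ)
    (hu : ContDiffOn ℝ (⊤ : ℕ∞) u Ω) (hv : ContDiffOn ℝ (⊤ : ℕ∞) v Ω) (hw : ContDiffOn ℝ (⊤ : ℕ∞) w Ω)
    (hOA : ∀ p ∈ Ω,
      pdx (pdx u) p = pdt (pdx v) p * pdx (pdx w) p - pdx (pdx v) p * pdt (pdx w) p
        + (pdt (pdx w) p) ^ 2 - pdx (pdx w) p * pdt (pdt w) p ∧
      pdt (pdx u) p = pdt (pdt v) p * pdx (pdx w) p - pdt (pdx v) p * pdt (pdx w) p ∧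
      pdt (pdt u) p = (pdt (pdx v) p) ^ 2 - pdx (pdx v) p * pdt (pdt v) p
        + pdt (pdt v) p * pdt (pdx w) p - pdt (pdx v) p * pdt (pdt w) p)
    (hwxx : ∀ p ∈ Ω, pdx (pdx w) p ≠ 0)
    (q1 q2 q3 q4 q5 q6 : ℝ × ℝ → ℝ)
    (hq1 : q1 = pdx (pdx u)) (hq2 : q2 = pdt (pdx u))
    (hq3 : q3 = pdx (pdx v)) (hq4 : q4 = pdt (pdx v))
    (hq5 : q5 = pdx (pdx w)) (hq6 : q6 = pdt (pdx w)) :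
    ∀ p ∈ Ω,
      pdt q1 p = pdx q2 p ∧
      pdt q2 p = pdx (fun z => (q2 z * q6 z + q1 z * q4 z - q2 z * q3 z) / q5 z) p ∧
      pdt q3 p = pdx q4 p ∧
      pdt q4 p = pdx (fun z => (q2 z + q4 z * q6 z) / q5 z) p ∧
      pdt q5 p = pdx q6 p ∧
      pdt q6 p = pdx (fun z => ((q6 z) ^ 2 - q3 z * q6 z + q4 z * q5 z - q1 z) / q5 z) p := by
  have hle : (3 : WithTop ℕ∞) ≤ (⊤ : ℕ∞) :=
    WithTop.coe_le_coe.2 (le_top : (3 : ℕ∞) ≤ ⊤)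
  exact statement1_general hΩ (hu.of_le hle) (hv.of_le hle) (hw.of_le hle)
    (fun p hp ↦ ⟨(hOA p hp).1, (hOA p hp).2.1, (hOA p hp).2.2⟩) hwxx hq1 hq2 hq3 hq4 hq5 hq6
end

section
/- Let Ω ⊆ ℝ² be open and let q = (q¹,…,q⁶) : Ω → ℝ⁶ be a smooth solution of the hydrodynamic system (six) with q⁵ nowhere zero. Let v : Ω → ℝ be a smooth function satisfying v³ − (q³ + q⁶)v² + (q³q⁶ − q⁴q⁵ − q¹)v + (q¹q⁶ − q²q⁵) = 0 at every point (i.e., v is a root of the characteristic polynomial of the Lax matrix), and assume v is a simple root, i.e., 3v² − 2(q³ + q⁶)v + (q³q⁶ − q⁴q⁵ − q¹) is nowhere zero on Ω. Then v is a conserved density: ∂_t v = ∂_x[(v² − q³·v − q¹)/q⁵] on Ω. -/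
/-! Put `w = (v ^ 2 - q3 * v - q1) / q5`. Then `(1, v, w)` is an eigenvector of the Lax matrix
`!![0, 1, 0; q1, q3, q5; q2, q4, q6]`, so `(v, w)` lies on the three quadrics

* `v ^ 2 = q1 + q3 * v + q5 * w`,
* `v * w = q2 + q4 * v + q6 * w`,
* `w ^ 2 = r1 + r2 * v + r3 * w`,

where `r1`, `r2`, `r3` are precisely the fluxes of `q2`, `q4`, `q6`. The system says that the
`t`-derivatives of the coefficients in each row are the `x`-derivatives of those in the next.
Comparing the `t`-derivative of each row with the `x`-derivative of the next therefore eliminates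
the derivatives of the coefficients and leaves two linear equations in `v_t`, `w_t`, `v_x`, `w_x`.
On eliminating `w_t` the terms in `v_x` cancel, and what remains is `v_t - w_x` times the
derivative of the characteristic polynomial at `v`, which is also the Jacobian determinant of the
first two quadrics in `(v, w)`. -/

section Quadrics

variable {K : Type*} [Field K] {q1 q2 q3 q4 q5 q6 v w : K}

theorem mul_eq_of_charpoly_eq_zero (hq5 : q5 ≠ 0)
    (hroot : v ^ 3 - (q3 + q6) * v ^ 2 + (q3 * q6 - q4 * q5 - q1) * v + (q1 * q6 - q2 * q5) = 0)
    (hvv : v ^ 2 = q1 + q3 * v + q5 * w) :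
    v * w = q2 + q4 * v + q6 * w := by
  apply mul_left_cancel₀ hq5
  linear_combination hroot - (v - q6) * hvv

theorem sq_eq_of_sq_eq_of_mul_eq (hq5 : q5 ≠ 0)
    (hvv : v ^ 2 = q1 + q3 * v + q5 * w) (hvw : v * w = q2 + q4 * v + q6 * w) :
    w ^ 2 = (q2 * q6 + q1 * q4 - q2 * q3) / q5 + (q2 + q4 * q6) / q5 * v
      + (q6 ^ 2 - q3 * q6 + q4 * q5 - q1) / q5 * w := by
  field_simp
  linear_combination (q4 - w) * hvv + (v + q6 - q3) * hvw

theorem charpoly_deriv_eq_jacobian (hvv : v ^ 2 = q1 + q3 * v + q5 * w) :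
    3 * v ^ 2 - 2 * (q3 + q6) * v + (q3 * q6 - q4 * q5 - q1)
      = (2 * v - q3) * (v - q6) + q5 * (w - q4) := by
  linear_combination hvv

theorem eq_of_linearized_quadrics {vt vx wt wx : K} (hq5 : q5 ≠ 0)
    (hvv : v ^ 2 = q1 + q3 * v + q5 * w) (hvw : v * w = q2 + q4 * v + q6 * w)
    (hsimple : 3 * v ^ 2 - 2 * (q3 + q6) * v + (q3 * q6 - q4 * q5 - q1) ≠ 0)
    (hfirst : 2 * v * vt - (q3 * vt + q5 * wt) = v * wx + w * vx - (q4 * vx + q6 * wx))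
    (hsecond : v * wt + w * vt - (q4 * vt + q6 * wt) = 2 * w * wx
      - ((q2 + q4 * q6) / q5 * vx + (q6 ^ 2 - q3 * q6 + q4 * q5 - q1) / q5 * wx)) :
    vt = wx := by
  have coeff_vx : (v - q6) * (w - q4) - q5 * ((q2 + q4 * q6) / q5) = 0 := by
    rw [mul_div_cancel₀ _ hq5]
    linear_combination hvw
  have coeff_wx : (v - q6) ^ 2 + q5 * (2 * w - (q6 ^ 2 - q3 * q6 + q4 * q5 - q1) / q5)
      = (2 * v - q3) * (v - q6) + q5 * (w - q4) := by
    rw [mul_sub, mul_div_cancel₀ _ hq5]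
    linear_combination -hvv
  rw [charpoly_deriv_eq_jacobian hvv] at hsimple
  apply mul_left_cancel₀ hsimple
  linear_combination (v - q6) * hfirst + q5 * hsecond + vx * coeff_vx + wx * coeff_wx

end Quadrics

section DirectionalDerivatives

open scoped Topology

variable {𝕜 E : Type*} [NontriviallyNormedField 𝕜] [NormedAddCommGroup E] [NormedSpace 𝕜 E]
  {v w : E → 𝕜} {p : E}

theorem fderiv_mul_apply (hv : DifferentiableAt 𝕜 v p) (hw : DifferentiableAt 𝕜 w p) (d : E) :
    fderiv 𝕜 (fun z => v z * w z) p d = v p * fderiv 𝕜 w p d + w p * fderiv 𝕜 v p d := by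
  simp [fderiv_fun_mul hv hw]

theorem fderiv_sq_apply (hv : DifferentiableAt 𝕜 v p) (d : E) :
    fderiv 𝕜 (fun z => v z ^ 2) p d = 2 * v p * fderiv 𝕜 v p d := by
  simp [fderiv_fun_pow 2 hv]

theorem fderiv_add_mul_add_mul_apply {a b c : E → 𝕜}
    (ha : DifferentiableAt 𝕜 a p) (hb : DifferentiableAt 𝕜 b p) (hc : DifferentiableAt 𝕜 c p)
    (hv : DifferentiableAt 𝕜 v p) (hw : DifferentiableAt 𝕜 w p) (d : E) :
    fderiv 𝕜 (fun z => a z + b z * v z + c z * w z) p d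
      = fderiv 𝕜 a p d + v p * fderiv 𝕜 b p d + w p * fderiv 𝕜 c p d
        + (b p * fderiv 𝕜 v p d + c p * fderiv 𝕜 w p d) := by
  rw [fderiv_fun_add (ha.fun_add (hb.fun_mul hv)) (hc.fun_mul hw),
    fderiv_fun_add ha (hb.fun_mul hv), add_apply, add_apply,
    fderiv_mul_apply hb hv, fderiv_mul_apply hc hw]
  ring

theorem fderiv_sub_eq_fderiv_sub_of_conservation {a b c a' b' c' f g : E → 𝕜} {x t : E}
    (ha : DifferentiableAt 𝕜 a p) (hb : DifferentiableAt 𝕜 b p) (hc : DifferentiableAt 𝕜 c p)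
    (ha' : DifferentiableAt 𝕜 a' p) (hb' : DifferentiableAt 𝕜 b' p)
    (hc' : DifferentiableAt 𝕜 c' p)
    (hv : DifferentiableAt 𝕜 v p) (hw : DifferentiableAt 𝕜 w p)
    (haa' : fderiv 𝕜 a p t = fderiv 𝕜 a' p x) (hbb' : fderiv 𝕜 b p t = fderiv 𝕜 b' p x)
    (hcc' : fderiv 𝕜 c p t = fderiv 𝕜 c' p x)
    (hf : ∀ᶠ z in 𝓝 p, f z = a z + b z * v z + c z * w z)
    (hg : ∀ᶠ z in 𝓝 p, g z = a' z + b' z * v z + c' z * w z) :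
    fderiv 𝕜 f p t - (b p * fderiv 𝕜 v p t + c p * fderiv 𝕜 w p t)
      = fderiv 𝕜 g p x - (b' p * fderiv 𝕜 v p x + c' p * fderiv 𝕜 w p x) := by
  rw [Filter.EventuallyEq.fderiv_eq hf, Filter.EventuallyEq.fderiv_eq hg,
    fderiv_add_mul_add_mul_apply ha hb hc hv hw,
    fderiv_add_mul_add_mul_apply ha' hb' hc' hv hw, haa', hbb', hcc']
  ring

theorem statement3_general {q1 q2 q3 q4 q5 q6 : E → 𝕜} {x t : E}
    (hq1 : DifferentiableAt 𝕜 q1 p) (hq2 : DifferentiableAt 𝕜 q2 p)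
    (hq3 : DifferentiableAt 𝕜 q3 p) (hq4 : DifferentiableAt 𝕜 q4 p)
    (hq5 : DifferentiableAt 𝕜 q5 p) (hq6 : DifferentiableAt 𝕜 q6 p)
    (hq5ne : q5 p ≠ 0)
    (hsys :
      fderiv 𝕜 q1 p t = fderiv 𝕜 q2 p x ∧
      fderiv 𝕜 q2 p t
        = fderiv 𝕜 (fun z => (q2 z * q6 z + q1 z * q4 z - q2 z * q3 z) / q5 z) p x ∧
      fderiv 𝕜 q3 p t = fderiv 𝕜 q4 p x ∧
      fderiv 𝕜 q4 p t = fderiv 𝕜 (fun z => (q2 z + q4 z * q6 z) / q5 z) p x ∧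
      fderiv 𝕜 q5 p t = fderiv 𝕜 q6 p x ∧
      fderiv 𝕜 q6 p t
        = fderiv 𝕜 (fun z => (q6 z ^ 2 - q3 z * q6 z + q4 z * q5 z - q1 z) / q5 z) p x)
    (hv : DifferentiableAt 𝕜 v p)
    (hroot : ∀ᶠ z in 𝓝 p, v z ^ 3 - (q3 z + q6 z) * v z ^ 2
      + (q3 z * q6 z - q4 z * q5 z - q1 z) * v z + (q1 z * q6 z - q2 z * q5 z) = 0)
    (hsimple : 3 * v p ^ 2 - 2 * (q3 p + q6 p) * v p + (q3 p * q6 p - q4 p * q5 p - q1 p) ≠ 0) :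
    fderiv 𝕜 v p t = fderiv 𝕜 (fun z => (v z ^ 2 - q3 z * v z - q1 z) / q5 z) p x := by
  obtain ⟨h1, h2, h3, h4, h5, h6⟩ := hsys
  set w : E → 𝕜 := fun z => (v z ^ 2 - q3 z * v z - q1 z) / q5 z with hw_def
  have hw : DifferentiableAt 𝕜 w p := by fun_prop (disch := exact hq5ne)
  have hne : ∀ᶠ z in 𝓝 p, q5 z ≠ 0 := hq5.continuousAt.eventually_ne hq5ne
  have hvv : ∀ᶠ z in 𝓝 p, v z ^ 2 = q1 z + q3 z * v z + q5 z * w z := by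
    filter_upwards [hne] with z hz
    rw [hw_def, mul_div_cancel₀ _ hz]
    ring
  have hvw : ∀ᶠ z in 𝓝 p, v z * w z = q2 z + q4 z * v z + q6 z * w z := by
    filter_upwards [hne, hroot, hvv] with z using mul_eq_of_charpoly_eq_zero
  have hww := hne.and (hvv.and hvw) |>.mono fun z h => sq_eq_of_sq_eq_of_mul_eq h.1 h.2.1 h.2.2
  have hfirst := fderiv_sub_eq_fderiv_sub_of_conservation hq1 hq3 hq5 hq2 hq4 hq6 hv hw
    h1 h3 h5 hvv hvw
  have hsecond := fderiv_sub_eq_fderiv_sub_of_conservation hq2 hq4 hq6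
    (by fun_prop (disch := exact hq5ne)) (by fun_prop (disch := exact hq5ne))
    (by fun_prop (disch := exact hq5ne)) hv hw h2 h4 h6 hvw hww
  rw [fderiv_sq_apply hv, fderiv_mul_apply hv hw] at hfirst
  rw [fderiv_mul_apply hv hw, fderiv_sq_apply hw] at hsecond
  exact eq_of_linearized_quadrics hq5ne hvv.self_of_nhds hvw.self_of_nhds hsimple hfirst hsecond

end DirectionalDerivatives

/-- for a smooth solution `(q¹,…,q⁶)` of the hydrodynamic system (six)
with `q⁵` nowhere zero, any smooth simple root `v` of the characteristic polynomial of
the Lax matrix is a conserved density: `∂_t v = ∂_x[(v² − q³v − q¹)/q⁵]`. -/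
theorem statement3 (Ω : Set (ℝ × ℝ)) (hΩ : IsOpen Ω)
    (q1 q2 q3 q4 q5 q6 : ℝ × ℝ → ℝ)
    (hq1 : ContDiffOn ℝ (⊤ : ℕ∞) q1 Ω) (hq2 : ContDiffOn ℝ (⊤ : ℕ∞) q2 Ω)
    (hq3 : ContDiffOn ℝ (⊤ : ℕ∞) q3 Ω) (hq4 : ContDiffOn ℝ (⊤ : ℕ∞) q4 Ω)
    (hq5 : ContDiffOn ℝ (⊤ : ℕ∞) q5 Ω) (hq6 : ContDiffOn ℝ (⊤ : ℕ∞) q6 Ω)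
    (hq5ne : ∀ p ∈ Ω, q5 p ≠ 0)
    (hsys : ∀ p ∈ Ω,
      pdt q1 p = pdx q2 p ∧
      pdt q2 p = pdx (fun z => (q2 z * q6 z + q1 z * q4 z - q2 z * q3 z) / q5 z) p ∧
      pdt q3 p = pdx q4 p ∧
      pdt q4 p = pdx (fun z => (q2 z + q4 z * q6 z) / q5 z) p ∧
      pdt q5 p = pdx q6 p ∧
      pdt q6 p = pdx (fun z => ((q6 z) ^ 2 - q3 z * q6 z + q4 z * q5 z - q1 z) / q5 z) p)
    (v : ℝ × ℝ → ℝ) (hv : ContDiffOn ℝ (⊤ : ℕ∞) v Ω)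
    (hroot : ∀ p ∈ Ω,
      (v p) ^ 3 - (q3 p + q6 p) * (v p) ^ 2
        + (q3 p * q6 p - q4 p * q5 p - q1 p) * v p + (q1 p * q6 p - q2 p * q5 p) = 0)
    (hsimple : ∀ p ∈ Ω,
      3 * (v p) ^ 2 - 2 * (q3 p + q6 p) * v p + (q3 p * q6 p - q4 p * q5 p - q1 p) ≠ 0) :
    ∀ p ∈ Ω, pdt v p = pdx (fun z => ((v z) ^ 2 - q3 z * v z - q1 z) / q5 z) p := by
  intro p hp
  have diff {f : ℝ × ℝ → ℝ} (hf : ContDiffOn ℝ (⊤ : ℕ∞) f Ω) : DifferentiableAt ℝ f p :=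
    (hf.contDiffAt (hΩ.mem_nhds hp)).differentiableAt (by simp)
  exact statement3_general (diff hq1) (diff hq2) (diff hq3) (diff hq4) (diff hq5) (diff hq6)
    (hq5ne p hp) (hsys p hp) (diff hv) ((hΩ.eventually_mem hp).mono hroot) (hsimple p hp)
end

section
/- Let Ω ⊆ ℝ² be open and u = (u¹,…,u⁶) : Ω → ℝ⁶ smooth with u⁵ nowhere zero and u¹, u², u³ pairwise distinct at every point. Define q = φ(u) : Ω → ℝ⁶ by the coordinate change φ, and let H(u) := q²-component of φ(u) and let g be the constant symmetric 6×6 matrix g = −[[0,1,1,0,0,0],[1,0,1,0,0,0],[1,1,0,0,0,0],[0,0,0,0,1,0],[0,0,0,1,0,0],[0,0,0,0,0,2]]. Then q satisfies the hydrodynamic system (six) on Ω if and only if u satisfies the Hamiltonian system u^i_t = Σ_k g^{ik} ∂_x[(∂H/∂u^k)(u)] for i = 1,…,6. -/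
/-- Partial derivative in direction `k` for functions on `ℝ⁶`. -/
noncomputable def pd (k : Fin 6) (f : (Fin 6 → ℝ) → ℝ) (x : Fin 6 → ℝ) : ℝ :=
  fderiv ℝ f x (Pi.single k 1)

/-- The coordinate change `φ : (u¹,…,u⁶) ↦ (q¹,…,q⁶)` (0-based indices: `u i = uⁱ⁺¹`). -/
noncomputable def phi (x : Fin 6 → ℝ) : Fin 6 → ℝ :=
  let q1 : ℝ := (1 / 4) * (x 0 + x 1 + x 2) ^ 2 - (x 0 * x 1 + x 0 * x 2 + x 1 * x 2)
    - (1 / 4) * (x 5) ^ 2 - x 3 * x 4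
  ![q1,
    (2 * x 0 * x 1 * x 2 + (x 0 + x 1 + x 2 - x 5) * q1) / (2 * x 4),
    (1 / 2) * (x 0 + x 1 + x 2 + x 5),
    x 3,
    x 4,
    (1 / 2) * (x 0 + x 1 + x 2 - x 5)]

/-- The constant flat (contravariant) metric `g^{ik}` of the first-order Hamiltonian
operator. -/
def gmat : Matrix (Fin 6) (Fin 6) ℝ :=
  -(!![0, 1, 1, 0, 0, 0;
       1, 0, 1, 0, 0, 0;
       1, 1, 0, 0, 0, 0;
       0, 0, 0, 0, 1, 0;
       0, 0, 0, 1, 0, 0;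
       0, 0, 0, 0, 0, 2])

structure HD {E : Type*} [NormedAddCommGroup E] [NormedSpace ℝ E] (f : E → ℝ) (p v : E) (d : ℝ) :
    Prop where
  diff : DifferentiableAt ℝ f p
  eq : fderiv ℝ f p v = d

/-!
Write the Hamiltonian system as `u_t = g ∂_x ∇H(u)`. It evolves every density `f` by
`f_t = ∇f ⬝ g ∂_x ∇H`, and each component of `φ` is a density for which the right-hand side is an
exact `x`-derivative:
* `q¹ = ½ g⁻¹(u, u)` is the momentum, so `g ∇q¹ = u`, and `u ⬝ ∂_x ∇H = ∂_x (u ⬝ ∇H - H) = ∂_x H`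
  because `H` is homogeneous of degree two;
* `q² = H` is the energy, and `∇H ⬝ g ∂_x ∇H = ∂_x (½ ∇H ⬝ g ∇H)` because `g` is symmetric;
* `q³, …, q⁶` are linear with constant gradients `c`, and `c ⬝ g ∂_x ∇H = ∂_x (c ⬝ g ∇H)`.

These fluxes are the ones of system (six), so that the latter reads
`Dφ(u) u_t = Dφ(u) (g ∂_x ∇H(u))`. Finally `Dφ` is injective where `u¹, u², u³` are distinct: modulo
its constant rows, the momentum and energy rows give the first and second power moments of a
vector at the nodes `u¹, u², u³`, a Vandermonde system.
-/

open Matrix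

section Calculus

variable {E ι κ : Type*} [NormedAddCommGroup E] [NormedSpace ℝ E]

theorem fderiv_eval_apply {a : E → ι → ℝ} {p : E} (ha : DifferentiableAt ℝ a p) (v : E) (i : ι) :
    fderiv ℝ (fun z => a z i) p v = fderiv ℝ a p v i := by
  rw [fderiv_apply ha, ContinuousLinearMap.comp_apply, ContinuousLinearMap.proj_apply]

theorem fderiv_comp_eval_apply {F : Type*} [NormedAddCommGroup F] [NormedSpace ℝ F]
    {f : F → ι → ℝ} {u : E → F} {p : E} (hf : DifferentiableAt ℝ f (u p))
    (hu : DifferentiableAt ℝ u p) (v : E) (i : ι) :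
    fderiv ℝ (fun z => f (u z) i) p v = fderiv ℝ f (u p) (fderiv ℝ u p v) i := by
  rw [← fderiv_eval_apply hf]
  exact DFunLike.congr_fun (fderiv_comp p (differentiableAt_pi.1 hf i) hu) v

variable [Fintype ι]

theorem differentiableAt_fun_dotProduct {a b : E → ι → ℝ} {p : E} (ha : DifferentiableAt ℝ a p)
    (hb : DifferentiableAt ℝ b p) : DifferentiableAt ℝ (fun z => a z ⬝ᵥ b z) p := by
  simp only [dotProduct]
  fun_prop

theorem fderiv_fun_dotProduct {a b : E → ι → ℝ} {p : E} (ha : DifferentiableAt ℝ a p)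
    (hb : DifferentiableAt ℝ b p) (v : E) :
    fderiv ℝ (fun z => a z ⬝ᵥ b z) p v = fderiv ℝ a p v ⬝ᵥ b p + a p ⬝ᵥ fderiv ℝ b p v := by
  have ha' := differentiableAt_pi.1 ha
  have hb' := differentiableAt_pi.1 hb
  simp only [dotProduct]
  rw [fderiv_fun_sum fun i _ => (ha' i).fun_mul (hb' i)]
  simp only [_root_.sum_apply, fderiv_fun_mul (ha' _) (hb' _), ← Finset.sum_add_distrib,
    _root_.add_apply, _root_.smul_apply, smul_eq_mul, fderiv_eval_apply ha, fderiv_eval_apply hb]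
  exact Finset.sum_congr rfl fun i _ => by ring

theorem fderiv_const_dotProduct (c : ι → ℝ) {V : E → ι → ℝ} {p : E}
    (hV : DifferentiableAt ℝ V p) (v : E) :
    fderiv ℝ (fun z => c ⬝ᵥ V z) p v = c ⬝ᵥ fderiv ℝ V p v := by
  simpa using fderiv_fun_dotProduct (differentiableAt_const c) hV v

theorem differentiableAt_fun_mulVec (M : Matrix κ ι ℝ) {V : E → ι → ℝ} {p : E}
    (hV : DifferentiableAt ℝ V p) : DifferentiableAt ℝ (fun z => M *ᵥ V z) p :=
  differentiableAt_pi.2 fun i => differentiableAt_fun_dotProduct (differentiableAt_const (M i)) hV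

theorem fderiv_fun_mulVec (M : Matrix κ ι ℝ) {V : E → ι → ℝ} {p : E}
    (hV : DifferentiableAt ℝ V p) (v : E) :
    fderiv ℝ (fun z => M *ᵥ V z) p v = M *ᵥ fderiv ℝ V p v := by
  ext i
  rw [← fderiv_eval_apply (differentiableAt_fun_mulVec M hV)]
  exact fderiv_const_dotProduct (M i) hV v

theorem dotProduct_mulVec_comm_of_isSymm {R : Type*} [CommSemiring R] {g : Matrix ι ι R}
    (hg : g.IsSymm) (v w : ι → R) : v ⬝ᵥ g *ᵥ w = w ⬝ᵥ g *ᵥ v := by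
  simpa only [hg.eq] using dotProduct_transpose_mulVec g v w

theorem fderiv_half_dotProduct_mulVec_self {g : Matrix ι ι ℝ} (hg : g.IsSymm) {V : E → ι → ℝ}
    {p : E} (hV : DifferentiableAt ℝ V p) (v : E) :
    fderiv ℝ (fun z => 1 / 2 * (V z ⬝ᵥ g *ᵥ V z)) p v = V p ⬝ᵥ g *ᵥ fderiv ℝ V p v := by
  have hgV := differentiableAt_fun_mulVec g hV
  rw [fderiv_const_mul (differentiableAt_fun_dotProduct hV hgV), _root_.smul_apply,
    fderiv_fun_dotProduct hV hgV, fderiv_fun_mulVec g hV,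
    dotProduct_mulVec_comm_of_isSymm hg (fderiv ℝ V p v), smul_eq_mul]
  ring

theorem dotProduct_fderiv_gradient_of_euler {f : (ι → ℝ) → ℝ} {V : (ι → ℝ) → ι → ℝ} {x : ι → ℝ}
    {k : ℝ} (hf : DifferentiableAt ℝ f x) (hV : DifferentiableAt ℝ V x)
    (hfV : ∀ w, fderiv ℝ f x w = V x ⬝ᵥ w) (euler : ∀ᶠ y in nhds x, y ⬝ᵥ V y = k * f y)
    (w : ι → ℝ) : x ⬝ᵥ fderiv ℝ V x w = (k - 1) * fderiv ℝ f x w := by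
  have h : w ⬝ᵥ V x + x ⬝ᵥ fderiv ℝ V x w = k * fderiv ℝ f x w := by
    have h := DFunLike.congr_fun (Filter.EventuallyEq.fderiv_eq (𝕜 := ℝ) euler) w
    rwa [fderiv_fun_dotProduct differentiableAt_fun_id hV, fderiv_fun_id, fderiv_const_mul hf,
      _root_.smul_apply, smul_eq_mul, ContinuousLinearMap.id_apply] at h
  rw [dotProduct_comm w, ← hfV] at h
  linear_combination h

end Calculus

theorem gmat_mulVec (v : Fin 6 → ℝ) :
    gmat *ᵥ v = ![-(v 1 + v 2), -(v 0 + v 2), -(v 0 + v 1), -v 4, -v 3, -(2 * v 5)] := by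
  ext i
  fin_cases i <;> simp [gmat, mulVec, dotProduct, Fin.sum_univ_six]

theorem gmat_isSymm : gmat.IsSymm := by
  ext i j
  fin_cases i <;> fin_cases j <;> simp [gmat]

/-- The flux `F` of system (six), which reads `q_t = ∂_x F(q)`. -/
noncomputable def hydroFlux (q : Fin 6 → ℝ) : Fin 6 → ℝ :=
  ![q 1,
    (q 1 * q 5 + q 0 * q 3 - q 1 * q 2) / q 4,
    q 3,
    (q 1 + q 3 * q 5) / q 4,
    q 5,
    ((q 5) ^ 2 - q 2 * q 5 + q 3 * q 4 - q 0) / q 4]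

/-- The gradient of the momentum density `q¹`, the quadratic form `½ g⁻¹(u, u)`. -/
noncomputable def momentumGradient (x : Fin 6 → ℝ) : Fin 6 → ℝ :=
  ![(x 0 - x 1 - x 2) / 2, (x 1 - x 0 - x 2) / 2, (x 2 - x 0 - x 1) / 2, -x 4, -x 3, -x 5 / 2]

/-- The gradient of the energy density `q² = H`, written through `q¹, q², q⁶` by implicit
differentiation of `u⁵ q² = u¹u²u³ + q⁶ q¹`. -/
noncomputable def energyGradient (x : Fin 6 → ℝ) : Fin 6 → ℝ :=
  ![(x 1 * x 2 + phi x 0 / 2 + phi x 5 * (x 0 - x 1 - x 2) / 2) / x 4,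
    (x 0 * x 2 + phi x 0 / 2 + phi x 5 * (x 1 - x 0 - x 2) / 2) / x 4,
    (x 0 * x 1 + phi x 0 / 2 + phi x 5 * (x 2 - x 0 - x 1) / 2) / x 4,
    -phi x 5,
    -(phi x 1 + phi x 5 * x 3) / x 4,
    -(phi x 0 + phi x 5 * x 5) / (2 * x 4)]

/-- The constant gradients of the linear components `q³, q⁴, q⁵, q⁶`, which are densities of
Casimirs of the Hamiltonian operator `g ∂_x`. -/
noncomputable def casimir : Matrix (Fin 4) (Fin 6) ℝ :=
  !![1 / 2, 1 / 2, 1 / 2, 0, 0, 1 / 2;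
     0, 0, 0, 1, 0, 0;
     0, 0, 0, 0, 1, 0;
     1 / 2, 1 / 2, 1 / 2, 0, 0, -1 / 2]

/-- The Jacobian matrix of `phi`, whose rows are the gradients of `q¹, …, q⁶`. -/
noncomputable def phiJacobian (x : Fin 6 → ℝ) : Matrix (Fin 6) (Fin 6) ℝ :=
  of (vecCons (momentumGradient x) (vecCons (energyGradient x) casimir))

theorem gmat_mulVec_momentumGradient (x : Fin 6 → ℝ) : gmat *ᵥ momentumGradient x = x := by
  ext i
  rw [gmat_mulVec]
  fin_cases i <;>
    simp only [momentumGradient, cons_val, Fin.reduceFinMk, Fin.zero_eta, Fin.mk_one] <;>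
    ring

theorem mul_phi_one {x : Fin 6 → ℝ} (hx : x 4 ≠ 0) :
    x 4 * phi x 1 = x 0 * x 1 * x 2 + phi x 5 * phi x 0 := by
  simp only [phi, cons_val]
  field

theorem phi_succ_succ (x : Fin 6 → ℝ) (i : Fin 4) : phi x i.succ.succ = casimir i ⬝ᵥ x := by
  fin_cases i <;> simp [phi, casimir, dotProduct, Fin.sum_univ_six] <;> ring

theorem eventually_apply_four_ne_zero {x : Fin 6 → ℝ} (hx : x 4 ≠ 0) :
    ∀ᶠ y : Fin 6 → ℝ in nhds x, y 4 ≠ 0 :=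
  (continuous_apply 4).continuousAt.eventually_ne hx

theorem differentiableAt_phi {x : Fin 6 → ℝ} (hx : x 4 ≠ 0) : DifferentiableAt ℝ phi x := by
  have hx' : 2 * x 4 ≠ 0 := mul_ne_zero two_ne_zero hx
  refine differentiableAt_pi.2 fun i => ?_
  fin_cases i <;>
    simp only [phi, cons_val, Fin.reduceFinMk, Fin.zero_eta, Fin.mk_one] <;>
    fun_prop (disch := assumption)

theorem differentiableAt_energyGradient {x : Fin 6 → ℝ} (hx : x 4 ≠ 0) :
    DifferentiableAt ℝ energyGradient x := by
  have hx' : 2 * x 4 ≠ 0 := mul_ne_zero two_ne_zero hx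
  have hphi := differentiableAt_pi.1 (differentiableAt_phi hx)
  refine differentiableAt_pi.2 fun i => ?_
  fin_cases i <;>
    simp only [energyGradient, cons_val, Fin.reduceFinMk, Fin.zero_eta, Fin.mk_one] <;>
    fun_prop (disch := assumption)

theorem differentiableAt_hydroFlux_phi {x : Fin 6 → ℝ} (hx : x 4 ≠ 0) :
    DifferentiableAt ℝ (fun y => hydroFlux (phi y)) x := by
  have hphi := differentiableAt_pi.1 (differentiableAt_phi hx)
  have hphi4 : phi x 4 ≠ 0 := hx
  refine differentiableAt_pi.2 fun i => ?_
  fin_cases i <;>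
    simp only [hydroFlux, cons_val, Fin.reduceFinMk, Fin.zero_eta, Fin.mk_one] <;>
    fun_prop (disch := assumption)

theorem fderiv_phi_zero (x w : Fin 6 → ℝ) :
    fderiv ℝ (fun y => phi y 0) x w = momentumGradient x ⬝ᵥ w := by
  simp only [phi, cons_val, momentumGradient, dotProduct, Fin.sum_univ_six]
  simp (disch := fun_prop) [fderiv_fun_add, fderiv_fun_sub, fderiv_fun_mul,
    fderiv_fun_pow, fderiv_apply]
  ring

theorem fderiv_phi_succ_succ (x w : Fin 6 → ℝ) (i : Fin 4) :
    fderiv ℝ (fun y => phi y i.succ.succ) x w = casimir i ⬝ᵥ w := by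
  simp only [phi_succ_succ]
  rw [fderiv_const_dotProduct (casimir i) differentiableAt_fun_id, fderiv_fun_id,
    ContinuousLinearMap.id_apply]

theorem fderiv_phi_one {x : Fin 6 → ℝ} (hx : x 4 ≠ 0) (w : Fin 6 → ℝ) :
    fderiv ℝ (fun y => phi y 1) x w = energyGradient x ⬝ᵥ w := by
  have hphi := differentiableAt_pi.1 (differentiableAt_phi hx)
  have implicit : x 4 * fderiv ℝ (fun y => phi y 1) x w + phi x 1 * w 4 =
      x 0 * x 1 * w 2 + x 2 * (x 0 * w 1 + x 1 * w 0) +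
        (phi x 5 * fderiv ℝ (fun y => phi y 0) x w +
          phi x 0 * fderiv ℝ (fun y => phi y 5) x w) := by
    have h := DFunLike.congr_fun (Filter.EventuallyEq.fderiv_eq (𝕜 := ℝ)
      ((eventually_apply_four_ne_zero hx).mono fun _ => mul_phi_one)) w
    simpa (disch := fun_prop) [fderiv_fun_add, fderiv_fun_mul, fderiv_apply, hphi, mul_add] using h
  have fderiv_phi_five : fderiv ℝ (fun y => phi y 5) x w = casimir 3 ⬝ᵥ w :=
    fderiv_phi_succ_succ x w 3
  rw [fderiv_phi_zero, fderiv_phi_five] at implicit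
  simp only [dotProduct, Fin.sum_univ_six, momentumGradient, casimir, cons_val, of_apply]
    at implicit
  simp only [dotProduct, Fin.sum_univ_six, energyGradient, cons_val]
  field_simp
  linear_combination 2 * implicit

theorem fderiv_phi {x : Fin 6 → ℝ} (hx : x 4 ≠ 0) (w : Fin 6 → ℝ) :
    fderiv ℝ phi x w = phiJacobian x *ᵥ w := by
  ext i
  rw [← fderiv_eval_apply (differentiableAt_phi hx)]
  match i with
  | 0 => exact fderiv_phi_zero x w
  | 1 => exact fderiv_phi_one hx w
  | ⟨i + 2, hi⟩ => exact fderiv_phi_succ_succ x w ⟨i, by lia⟩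

theorem pd_phi_one {x : Fin 6 → ℝ} (hx : x 4 ≠ 0) (k : Fin 6) :
    pd k (fun y => phi y 1) x = energyGradient x k := by
  rw [pd, fderiv_phi_one hx, dotProduct_single_one]

theorem dotProduct_energyGradient {x : Fin 6 → ℝ} (hx : x 4 ≠ 0) :
    x ⬝ᵥ energyGradient x = 2 * phi x 1 := by
  simp only [dotProduct, Fin.sum_univ_six, energyGradient, phi, cons_val]
  field

theorem hydroFlux_phi_one {x : Fin 6 → ℝ} (hx : x 4 ≠ 0) :
    hydroFlux (phi x) 1 = 1 / 2 * (energyGradient x ⬝ᵥ gmat *ᵥ energyGradient x) := by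
  simp only [gmat_mulVec, hydroFlux, dotProduct, Fin.sum_univ_six, energyGradient, phi, cons_val]
  field

theorem hydroFlux_phi_succ_succ {x : Fin 6 → ℝ} (hx : x 4 ≠ 0) (i : Fin 4) :
    hydroFlux (phi x) i.succ.succ = casimir i ⬝ᵥ gmat *ᵥ energyGradient x := by
  rw [gmat_mulVec]
  fin_cases i <;>
    simp [casimir, hydroFlux, dotProduct, Fin.sum_univ_six, energyGradient, phi] <;> field

theorem fderiv_hydroFlux_phi {x : Fin 6 → ℝ} (hx : x 4 ≠ 0) (w : Fin 6 → ℝ) :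
    fderiv ℝ (fun y => hydroFlux (phi y)) x w =
      phiJacobian x *ᵥ gmat *ᵥ fderiv ℝ energyGradient x w := by
  have hV := differentiableAt_energyGradient hx
  have hphi := differentiableAt_phi hx
  have hnear := eventually_apply_four_ne_zero hx
  ext i
  rw [← fderiv_eval_apply (differentiableAt_hydroFlux_phi hx)]
  match i with
  | 0 =>
    calc fderiv ℝ (fun y => phi y 1) x w
      _ = x ⬝ᵥ fderiv ℝ energyGradient x w := by
        rw [dotProduct_fderiv_gradient_of_euler (differentiableAt_pi.1 hphi 1) hV
          (fderiv_phi_one hx) (hnear.mono fun _ => dotProduct_energyGradient)]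
        ring
      _ = momentumGradient x ⬝ᵥ gmat *ᵥ fderiv ℝ energyGradient x w := by
        rw [dotProduct_mulVec_comm_of_isSymm gmat_isSymm, gmat_mulVec_momentumGradient,
          dotProduct_comm]
  | 1 =>
    rw [Filter.EventuallyEq.fderiv_eq (hnear.mono fun _ => hydroFlux_phi_one)]
    exact fderiv_half_dotProduct_mulVec_self gmat_isSymm hV w
  | ⟨i + 2, hi⟩ =>
    have hgV := differentiableAt_fun_mulVec gmat hV
    rw [Filter.EventuallyEq.fderiv_eq
        (hnear.mono fun _ hy => hydroFlux_phi_succ_succ hy ⟨i, by lia⟩),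
      fderiv_const_dotProduct _ hgV, fderiv_fun_mulVec gmat hV]
    rfl

theorem eq_zero_of_sum_mul_pow_eq_zero {R : Type*} [CommRing R] [IsDomain R] {a b c α β γ : R}
    (hab : a ≠ b) (hac : a ≠ c) (hbc : b ≠ c) (h0 : α + β + γ = 0)
    (h1 : α * a + β * b + γ * c = 0) (h2 : α * a ^ 2 + β * b ^ 2 + γ * c ^ 2 = 0) :
    α = 0 ∧ β = 0 ∧ γ = 0 := by
  have hinj : Function.Injective ![a, b, c] := by
    intro i j hij
    fin_cases i <;> fin_cases j <;> simp_all
  have h : ![α, β, γ] = 0 := by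
    refine eq_zero_of_forall_pow_sum_mul_pow_eq_zero hinj fun i => ?_
    fin_cases i <;> simpa [Fin.sum_univ_three]
  simpa using h

theorem phiJacobian_mulVec_injective {x : Fin 6 → ℝ} (hx : x 4 ≠ 0)
    (hdist : x 0 ≠ x 1 ∧ x 0 ≠ x 2 ∧ x 1 ≠ x 2) :
    Function.Injective (phiJacobian x).mulVec := by
  obtain ⟨h01, h02, h12⟩ := hdist
  refine (injective_iff_map_eq_zero (phiJacobian x).mulVecLin).2 fun d hd => ?_
  have row (i) : phiJacobian x i ⬝ᵥ d = 0 := congr_fun hd i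
  have casimir_row (i : Fin 4) : casimir i ⬝ᵥ d = 0 := row i.succ.succ
  have hd3 : d 3 = 0 := by simpa [casimir, dotProduct, Fin.sum_univ_six] using casimir_row 1
  have hd4 : d 4 = 0 := by simpa [casimir, dotProduct, Fin.sum_univ_six] using casimir_row 2
  have hq3 := casimir_row 0
  have hq6 := casimir_row 3
  simp only [casimir, dotProduct, Fin.sum_univ_six, cons_val, of_apply] at hq3 hq6
  have hd5 : d 5 = 0 := by linarith
  have power_sum_zero : d 0 + d 1 + d 2 = 0 := by linarith
  have power_sum_one : d 0 * x 0 + d 1 * x 1 + d 2 * x 2 = 0 := by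
    have momentum_row : momentumGradient x ⬝ᵥ d = 0 := row 0
    simp only [momentumGradient, dotProduct, Fin.sum_univ_six, cons_val, hd3, hd4, hd5]
      at momentum_row
    linear_combination momentum_row + (x 0 + x 1 + x 2) / 2 * power_sum_zero
  have power_sum_two : d 0 * x 0 ^ 2 + d 1 * x 1 ^ 2 + d 2 * x 2 ^ 2 = 0 := by
    have energy_row : energyGradient x ⬝ᵥ d = 0 := row 1
    simp only [energyGradient, dotProduct, Fin.sum_univ_six, cons_val, hd3, hd4, hd5] at energy_row
    field_simp at energy_row
    linear_combination energy_row / 2 + (x 0 + x 1 + x 2 - phi x 5) * power_sum_one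
      + (phi x 5 * (x 0 + x 1 + x 2) / 2 - phi x 0 / 2
        - (x 0 * x 1 + x 0 * x 2 + x 1 * x 2)) * power_sum_zero
  obtain ⟨hd0, hd1, hd2⟩ :=
    eq_zero_of_sum_mul_pow_eq_zero h01 h02 h12 power_sum_zero power_sum_one power_sum_two
  ext i
  fin_cases i <;> assumption

theorem hydrodynamic_iff_phiJacobian_mulVec_eq {u : ℝ × ℝ → Fin 6 → ℝ} {p : ℝ × ℝ}
    (hu : DifferentiableAt ℝ u p) (hu5 : u p 4 ≠ 0) :
    (∀ i, pdt (fun z => phi (u z) i) p = pdx (fun z => hydroFlux (phi (u z)) i) p) ↔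
      phiJacobian (u p) *ᵥ fderiv ℝ u p (0, 1) =
        phiJacobian (u p) *ᵥ gmat *ᵥ fderiv ℝ energyGradient (u p) (fderiv ℝ u p (1, 0)) := by
  simp only [pdt, pdx, fderiv_comp_eval_apply (differentiableAt_phi hu5) hu,
    fderiv_comp_eval_apply (differentiableAt_hydroFlux_phi hu5) hu, fderiv_phi hu5,
    fderiv_hydroFlux_phi hu5, funext_iff]

theorem hamiltonian_iff_fderiv_eq_gmat_mulVec {u : ℝ × ℝ → Fin 6 → ℝ} {p : ℝ × ℝ}
    (hu : DifferentiableAt ℝ u p) (hu5 : u p 4 ≠ 0) :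
    (∀ i, pdt (fun z => u z i) p =
        ∑ k, gmat i k * pdx (fun z => pd k (fun y => phi y 1) (u z)) p) ↔
      fderiv ℝ u p (0, 1) =
        gmat *ᵥ fderiv ℝ energyGradient (u p) (fderiv ℝ u p (1, 0)) := by
  have hpd (k) : (fun z => pd k (fun y => phi y 1) (u z)) =ᶠ[nhds p]
      fun z => energyGradient (u z) k :=
    (hu.continuousAt.eventually (eventually_apply_four_ne_zero hu5)).mono fun z hz =>
      pd_phi_one hz k
  simp only [pdt, pdx, (hpd _).fderiv_eq, fderiv_eval_apply hu,
    fderiv_comp_eval_apply (differentiableAt_energyGradient hu5) hu, funext_iff, mulVec, dotProduct]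

theorem hydrodynamic_iff_hamiltonian {u : ℝ × ℝ → Fin 6 → ℝ} {p : ℝ × ℝ}
    (hu : DifferentiableAt ℝ u p) (hu5 : u p 4 ≠ 0)
    (hdist : u p 0 ≠ u p 1 ∧ u p 0 ≠ u p 2 ∧ u p 1 ≠ u p 2) :
    (∀ i, pdt (fun z => phi (u z) i) p = pdx (fun z => hydroFlux (phi (u z)) i) p) ↔
      ∀ i, pdt (fun z => u z i) p =
        ∑ k, gmat i k * pdx (fun z => pd k (fun y => phi y 1) (u z)) p := by
  rw [hydrodynamic_iff_phiJacobian_mulVec_eq hu hu5, hamiltonian_iff_fderiv_eq_gmat_mulVec hu hu5]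
  exact (phiJacobian_mulVec_injective hu5 hdist).eq_iff

theorem statement5_general {Ω : Set (ℝ × ℝ)} {u : ℝ × ℝ → Fin 6 → ℝ}
    (hu : ∀ p ∈ Ω, DifferentiableAt ℝ u p) (hu5 : ∀ p ∈ Ω, u p 4 ≠ 0)
    (hdist : ∀ p ∈ Ω, u p 0 ≠ u p 1 ∧ u p 0 ≠ u p 2 ∧ u p 1 ≠ u p 2)
    {q : ℝ × ℝ → Fin 6 → ℝ} (hq : ∀ p, q p = phi (u p))
    {H : (Fin 6 → ℝ) → ℝ} (hH : ∀ x, H x = phi x 1) :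
    (∀ p ∈ Ω,
      pdt (fun z => q z 0) p = pdx (fun z => q z 1) p ∧
      pdt (fun z => q z 1) p
        = pdx (fun z => (q z 1 * q z 5 + q z 0 * q z 3 - q z 1 * q z 2) / q z 4) p ∧
      pdt (fun z => q z 2) p = pdx (fun z => q z 3) p ∧
      pdt (fun z => q z 3) p = pdx (fun z => (q z 1 + q z 3 * q z 5) / q z 4) p ∧
      pdt (fun z => q z 4) p = pdx (fun z => q z 5) p ∧
      pdt (fun z => q z 5) p
        = pdx (fun z => ((q z 5) ^ 2 - q z 2 * q z 5 + q z 3 * q z 4 - q z 0) / q z 4) p) ↔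
    (∀ i : Fin 6, ∀ p ∈ Ω,
      pdt (fun z => u z i) p = ∑ k, gmat i k * pdx (fun z => pd k H (u z)) p) := by
  obtain rfl : q = fun p => phi (u p) := funext hq
  obtain rfl : H = fun x => phi x 1 := funext hH
  rw [forall_comm]
  refine forall_congr' fun p => ?_
  rw [forall_comm]
  refine forall_congr' fun hp => ?_
  rw [← hydrodynamic_iff_hamiltonian (hu p hp) (hu5 p hp) (hdist p hp)]
  simp [Fin.forall_fin_succ, hydroFlux]

/-- for smooth `u : Ω → ℝ⁶` with `u⁵` nowhere zero and `u¹,u²,u³` pairwise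
distinct, `q = φ(u)` satisfies the hydrodynamic system (six) if and only if `u` satisfies
the Hamiltonian system `uⁱ_t = Σ_k g^{ik} ∂_x[(∂H/∂u^k)(u)]` with Hamiltonian density
`H(u) = q²`-component of `φ(u)`. -/
theorem statement5 (Ω : Set (ℝ × ℝ)) (hΩ : IsOpen Ω)
    (u : ℝ × ℝ → (Fin 6 → ℝ)) (hu : ContDiffOn ℝ (⊤ : ℕ∞) u Ω)
    (hu5 : ∀ p ∈ Ω, u p 4 ≠ 0)
    (hdist : ∀ p ∈ Ω, u p 0 ≠ u p 1 ∧ u p 0 ≠ u p 2 ∧ u p 1 ≠ u p 2)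
    (q : ℝ × ℝ → (Fin 6 → ℝ)) (hq : ∀ p, q p = phi (u p))
    (H : (Fin 6 → ℝ) → ℝ) (hH : ∀ x, H x = phi x 1) :
    (∀ p ∈ Ω,
      pdt (fun z => q z 0) p = pdx (fun z => q z 1) p ∧
      pdt (fun z => q z 1) p
        = pdx (fun z => (q z 1 * q z 5 + q z 0 * q z 3 - q z 1 * q z 2) / q z 4) p ∧
      pdt (fun z => q z 2) p = pdx (fun z => q z 3) p ∧
      pdt (fun z => q z 3) p = pdx (fun z => (q z 1 + q z 3 * q z 5) / q z 4) p ∧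
      pdt (fun z => q z 4) p = pdx (fun z => q z 5) p ∧
      pdt (fun z => q z 5) p
        = pdx (fun z => ((q z 5) ^ 2 - q z 2 * q z 5 + q z 3 * q z 4 - q z 0) / q z 4) p) ↔
    (∀ i : Fin 6, ∀ p ∈ Ω,
      pdt (fun z => u z i) p = ∑ k, gmat i k * pdx (fun z => pd k H (u z)) p) :=
  statement5_general (fun _ hp => (hu.contDiffAt (hΩ.mem_nhds hp)).differentiableAt (by simp))
    hu5 hdist hq hH
end

section
/- Let G : ℝ⁶ → Mat₆(ℝ) be the matrix-valued polynomial map defined by the explicit Monge metric of the Oriented Associativity equation. Then for all q ∈ ℝ⁶: (i) G(q) is symmetric; (ii) every entry of G is a polynomial in q¹,…,q⁶ of degree at most 2; (iii) the cyclic condition ∂G_{ij}/∂q^k + ∂G_{jk}/∂q^i + ∂G_{ki}/∂q^j = 0 holds for all indices i, j, k ∈ {1,…,6}. -/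
/-- The Monge metric `G(q)` of the Oriented Associativity equation
(0-based indices: `q i = qⁱ⁺¹`). -/
def G (q : Fin 6 → ℝ) : Matrix (Fin 6) (Fin 6) ℝ :=
  !![2, 0, q 2, -q 4, 2 * q 3, 0;
     0, 0, 2 * q 4, 0, -q 2 + 2 * q 5, -q 4;
     q 2, 2 * q 4, -2 * (q 0 + q 3 * q 4), q 4 * (q 2 - q 5),
       -q 1 + q 3 * (q 2 - q 5), 2 * q 3 * q 4;
     -q 4, 0, q 4 * (q 2 - q 5), 2 * (q 4) ^ 2,
       -q 0 + q 2 * (-q 2 + 2 * q 5) - 2 * q 3 * q 4 - (q 5) ^ 2, q 4 * (-q 2 + q 5);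
     2 * q 3, -q 2 + 2 * q 5, -q 1 + q 3 * (q 2 - q 5),
       -q 0 + q 2 * (-q 2 + 2 * q 5) - 2 * q 3 * q 4 - (q 5) ^ 2, 2 * (q 3) ^ 2,
       -q 1 + q 3 * (-q 2 + q 5);
     0, -q 4, 2 * q 3 * q 4, q 4 * (-q 2 + q 5), -q 1 + q 3 * (-q 2 + q 5),
       -2 * q 3 * q 4]

/-!
The cyclic condition is the Killing tensor equation of flat space, and the symmetrized product of
two Killing covectors is a Killing tensor. The affine covectors `dqⁱ` (translations) and
`wᵢⱼ = qⁱ dqʲ - qʲ dqⁱ` (rotations) are Killing, so every sum of symmetrized products of their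
linear combinations is a symmetric Killing tensor of degree at most `2`. The Monge metric is such
a sum: with 0-based indices, as a quadratic form,
`G = 2 (dq⁰ + w₃₄)² + 2 (w₄₂ - w₄₅) (dq¹ - w₃₂ + w₃₅) + 2 dq² (w₂₀ + w₄₁) + 2 dq³ w₄₀ + 2 dq⁴ w₅₁`.
-/

section Calculus

open MvPolynomial

theorem hasFDerivAt_mvPolynomial_eval {𝕜 σ : Type*} [NontriviallyNormedField 𝕜] [Fintype σ]
    (P : MvPolynomial σ 𝕜) (q : σ → 𝕜) :
    HasFDerivAt (fun x => eval x P)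
      (∑ i, eval q (pderiv i P) • (ContinuousLinearMap.proj i : (σ → 𝕜) →L[𝕜] 𝕜)) q := by
  classical
  induction P using MvPolynomial.induction_on with
  | C a =>
    simp only [eval_C, pderiv_C, map_zero]
    exact (hasFDerivAt_const a q).congr_fderiv (by ext; simp)
  | add P Q hP hQ =>
    simp only [map_add]
    refine (hP.fun_add hQ).congr_fderiv ?_
    ext v
    simp [add_mul, Finset.sum_add_distrib]
  | mul_X P i hP =>
    simp only [map_mul, eval_X]
    refine (hP.fun_mul (hasFDerivAt_apply i q)).congr_fderiv ?_
    ext v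
    simp [pderiv_X, Pi.single_apply, apply_ite, add_mul, mul_assoc, Finset.sum_add_distrib,
      Finset.mul_sum]

theorem pd_mvPolynomial_eval (P : MvPolynomial (Fin 6) ℝ) (k : Fin 6) (q : Fin 6 → ℝ) :
    pd k (fun x => eval x P) q = eval q (pderiv k P) := by
  simp [pd, (hasFDerivAt_mvPolynomial_eval P q).fderiv, Pi.single_apply]

end Calculus

section Killing

open MvPolynomial Matrix

theorem mul_mem_restrictTotalDegree {σ R : Type*} [CommSemiring R]
    {P Q : MvPolynomial σ R} {m n : ℕ}
    (hP : P ∈ restrictTotalDegree σ R m) (hQ : Q ∈ restrictTotalDegree σ R n) :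
    P * Q ∈ restrictTotalDegree σ R (m + n) := by
  rw [mem_restrictTotalDegree] at *
  exact (totalDegree_mul P Q).trans (add_le_add hP hQ)

/-- The symmetrized product `α ⊗ β + β ⊗ α` of two covectors, whose quadratic form is `2 α β`. -/
def symmetrizedProduct {σ A : Type*} [Mul A] [Add A] (α β : σ → A) : Matrix σ σ A :=
  vecMulVec α β + vecMulVec β α

theorem symmetrizedProduct_apply {σ A : Type*} [Mul A] [Add A] (α β : σ → A) (i j : σ) :
    symmetrizedProduct α β i j = α i * β j + β i * α j :=
  rfl

variable {σ R : Type*} [CommRing R]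

variable (σ R) in
/-- The covectors on flat space, with polynomial components of degree at most `1`, that satisfy the
Killing equation `∂ⱼ αᵢ + ∂ᵢ αⱼ = 0`. -/
def affineKillingCovectors : Submodule R (σ → MvPolynomial σ R) where
  carrier := {α | (∀ i, α i ∈ restrictTotalDegree σ R 1) ∧
    ∀ i j, pderiv j (α i) + pderiv i (α j) = 0}
  zero_mem' := by simp
  add_mem' {α β} hα hβ := by
    refine ⟨fun i => add_mem (hα.1 i) (hβ.1 i), fun i j => ?_⟩
    simp only [Pi.add_apply, map_add]
    linear_combination hα.2 i j + hβ.2 i j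
  smul_mem' c α hα := by
    refine ⟨fun i => Submodule.smul_mem _ c (hα.1 i), fun i j => ?_⟩
    simp only [Pi.smul_apply, Derivation.map_smul, ← smul_add, hα.2 i j, smul_zero]

variable (σ R) in
/-- The symmetric 2-tensors on flat space, with polynomial components of degree at most `2`, that
satisfy the Killing tensor equation `∂ₖ Tᵢⱼ + ∂ᵢ Tⱼₖ + ∂ⱼ Tₖᵢ = 0`. Monge metrics are
tensors of this kind. -/
def quadraticKillingTensors : Submodule R (Matrix σ σ (MvPolynomial σ R)) where
  carrier := {T | T.IsSymm ∧ (∀ i j, T i j ∈ restrictTotalDegree σ R 2) ∧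
    ∀ i j k, pderiv k (T i j) + pderiv i (T j k) + pderiv j (T k i) = 0}
  zero_mem' := by simp
  add_mem' {S T} hS hT := by
    refine ⟨hS.1.add hT.1, fun i j => add_mem (hS.2.1 i j) (hT.2.1 i j), fun i j k => ?_⟩
    simp only [Matrix.add_apply, map_add]
    linear_combination hS.2.2 i j k + hT.2.2 i j k
  smul_mem' c T hT := by
    refine ⟨hT.1.smul c, fun i j => Submodule.smul_mem _ c (hT.2.1 i j), fun i j k => ?_⟩
    simp only [Matrix.smul_apply, Derivation.map_smul, ← smul_add, hT.2.2 i j k, smul_zero]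

theorem mem_affineKillingCovectors {α : σ → MvPolynomial σ R} :
    α ∈ affineKillingCovectors σ R ↔
      (∀ i, α i ∈ restrictTotalDegree σ R 1) ∧ ∀ i j, pderiv j (α i) + pderiv i (α j) = 0 :=
  Iff.rfl

theorem mem_quadraticKillingTensors {T : Matrix σ σ (MvPolynomial σ R)} :
    T ∈ quadraticKillingTensors σ R ↔
      T.IsSymm ∧ (∀ i j, T i j ∈ restrictTotalDegree σ R 2) ∧
        ∀ i j k, pderiv k (T i j) + pderiv i (T j k) + pderiv j (T k i) = 0 :=
  Iff.rfl

theorem symmetrizedProduct_mem_quadraticKillingTensors {α β : σ → MvPolynomial σ R}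
    (hα : α ∈ affineKillingCovectors σ R) (hβ : β ∈ affineKillingCovectors σ R) :
    symmetrizedProduct α β ∈ quadraticKillingTensors σ R := by
  obtain ⟨hα_deg, hα_killing⟩ := mem_affineKillingCovectors.1 hα
  obtain ⟨hβ_deg, hβ_killing⟩ := mem_affineKillingCovectors.1 hβ
  refine mem_quadraticKillingTensors.2 ⟨?_, fun i j => ?_, fun i j k => ?_⟩
  · rw [symmetrizedProduct, ← transpose_vecMulVec α β]
    exact isSymm_add_transpose_self _
  · rw [symmetrizedProduct_apply]
    exact add_mem (mul_mem_restrictTotalDegree (m := 1) (n := 1) (hα_deg i) (hβ_deg j))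
      (mul_mem_restrictTotalDegree (m := 1) (n := 1) (hβ_deg i) (hα_deg j))
  · simp only [symmetrizedProduct_apply, map_add, pderiv_mul]
    linear_combination β i * hα_killing j k + β j * hα_killing k i + β k * hα_killing i j +
      α i * hβ_killing j k + α j * hβ_killing k i + α k * hβ_killing i j

variable [DecidableEq σ]

variable (R) in
/-- The covector `dqⁱ`, dual to an infinitesimal translation. -/
noncomputable def translationCovector (i : σ) : σ → MvPolynomial σ R :=
  Pi.single i 1

variable (R) in
/-- The covector `qⁱ dqʲ - qʲ dqⁱ`, dual to an infinitesimal rotation in the `(i, j)`-plane. -/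
noncomputable def rotationCovector (i j : σ) : σ → MvPolynomial σ R :=
  Pi.single j (X i) - Pi.single i (X j)

theorem translationCovector_mem_affineKillingCovectors (i : σ) :
    translationCovector R i ∈ affineKillingCovectors σ R := by
  refine ⟨fun k => ?_, fun k l => ?_⟩
  · rw [translationCovector, Pi.single_apply]
    split_ifs <;> simp [mem_restrictTotalDegree]
  · simp [translationCovector, Pi.single_apply, apply_ite]

theorem rotationCovector_mem_affineKillingCovectors (i j : σ) :
    rotationCovector R i j ∈ affineKillingCovectors σ R := by
  have single_X_mem (a b k : σ) :
      (Pi.single a (X b) : σ → MvPolynomial σ R) k ∈ restrictTotalDegree σ R 1 := by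
    rw [Pi.single_apply]
    split_ifs
    · exact (mem_restrictTotalDegree σ 1 _).2 (isHomogeneous_X R b).totalDegree_le
    · exact zero_mem _
  have pderiv_single_X (a b k l : σ) :
      pderiv l ((Pi.single a (X b) : σ → MvPolynomial σ R) k) =
        if k = a ∧ l = b then 1 else 0 := by
    by_cases hk : k = a <;> simp [hk, Pi.single_apply, pderiv_X, eq_comm]
  refine ⟨fun k => sub_mem (single_X_mem j i k) (single_X_mem i j k), fun k l => ?_⟩
  simp only [rotationCovector, Pi.sub_apply, map_sub, pderiv_single_X,
    and_comm (a := l = _)]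
  ring

end Killing

/-- The components of the Monge metric `G` as polynomials, in the form of a sum of symmetrized
products of Killing covectors. -/
noncomputable def mongePolynomials : Matrix (Fin 6) (Fin 6) (MvPolynomial (Fin 6) ℝ) :=
  let d := translationCovector (σ := Fin 6) ℝ
  let w := rotationCovector (σ := Fin 6) ℝ
  symmetrizedProduct (d 0 + w 3 4) (d 0 + w 3 4) +
    symmetrizedProduct (w 4 2 - w 4 5) (d 1 - w 3 2 + w 3 5) +
    symmetrizedProduct (d 2) (w 2 0 + w 4 1) +
    symmetrizedProduct (d 3) (w 4 0) +
    symmetrizedProduct (d 4) (w 5 1)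

theorem mongePolynomials_mem_quadraticKillingTensors :
    mongePolynomials ∈ quadraticKillingTensors (Fin 6) ℝ := by
  have hd := translationCovector_mem_affineKillingCovectors (σ := Fin 6) (R := ℝ)
  have hw := rotationCovector_mem_affineKillingCovectors (σ := Fin 6) (R := ℝ)
  have hprod {α β : Fin 6 → MvPolynomial (Fin 6) ℝ} :=
    symmetrizedProduct_mem_quadraticKillingTensors (α := α) (β := β)
  exact add_mem (add_mem (add_mem (add_mem
    (hprod (add_mem (hd 0) (hw 3 4)) (add_mem (hd 0) (hw 3 4)))
    (hprod (sub_mem (hw 4 2) (hw 4 5)) (add_mem (sub_mem (hd 1) (hw 3 2)) (hw 3 5))))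
    (hprod (hd 2) (add_mem (hw 2 0) (hw 4 1))))
    (hprod (hd 3) (hw 4 0)))
    (hprod (hd 4) (hw 5 1))

theorem G_apply_eq_eval_mongePolynomials (q : Fin 6 → ℝ) (i j : Fin 6) :
    G q i j = MvPolynomial.eval q (mongePolynomials i j) := by
  fin_cases i <;> fin_cases j <;>
    simp [G, mongePolynomials, symmetrizedProduct_apply, translationCovector, rotationCovector,
      -mul_eq_mul_left_iff, -mul_eq_mul_right_iff] <;>
    ring

/-- the Monge metric `G(q)` is symmetric, its entries are polynomials of
degree at most 2 in `q¹,…,q⁶`, and it satisfies the cyclic condition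
`G_{ij,k} + G_{jk,i} + G_{ki,j} = 0`. -/
theorem statement7 :
    (∀ q : Fin 6 → ℝ, (G q).IsSymm) ∧
    (∀ i j : Fin 6, ∃ P : MvPolynomial (Fin 6) ℝ,
      P.totalDegree ≤ 2 ∧ ∀ q : Fin 6 → ℝ, G q i j = MvPolynomial.eval q P) ∧
    (∀ (i j k : Fin 6) (q : Fin 6 → ℝ),
      pd k (fun x => G x i j) q + pd i (fun x => G x j k) q + pd j (fun x => G x k i) q
        = 0) := by
  obtain ⟨hsymm, hdeg, hcyclic⟩ := mongePolynomials_mem_quadraticKillingTensors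
  refine ⟨fun q => ?_, fun i j => ⟨mongePolynomials i j, ?_, fun q => ?_⟩,
    fun i j k q => ?_⟩
  · have hG : G q = mongePolynomials.map (MvPolynomial.eval q) :=
      Matrix.ext (G_apply_eq_eval_mongePolynomials q)
    exact hG ▸ hsymm.map _
  · exact (MvPolynomial.mem_restrictTotalDegree _ _ _).1 (hdeg i j)
  · exact G_apply_eq_eval_mongePolynomials q i j
  · simp only [G_apply_eq_eval_mongePolynomials, pd_mvPolynomial_eval, ← map_add, hcyclic, map_zero]
end

section
/- Let G(q) be the Monge metric of the Oriented Associativity equation and on the open set U ⊆ ℝ⁶ where q⁵ ≠ 0 and det G(q) ≠ 0 define g := G⁻¹, c_{nkm} := (1/3)(∂G_{mn}/∂q^k − ∂G_{kn}/∂q^m) and c^s_{ml} := Σ_p g^{sp} c_{pml}. Then G does NOT satisfy the integrability condition for a local third-order homogeneous Hamiltonian operator: there exist indices n, m, l, k ∈ {1,…,6} and a point q ∈ U such that ∂c_{nml}/∂q^k + Σ_s c^s_{ml} c_{snk} ≠ 0. -/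
/-- Inverse Monge metric `g^{ij} = (G(q)⁻¹)_{ij}`. -/
noncomputable def ginv (q : Fin 6 → ℝ) : Matrix (Fin 6) (Fin 6) ℝ := (G q)⁻¹

/-- The lowered symbols `c_{nkm} = (1/3)(∂G_{mn}/∂q^k − ∂G_{kn}/∂q^m)`. -/
noncomputable def cLow (n k m : Fin 6) (q : Fin 6 → ℝ) : ℝ :=
  (1 / 3) * (pd k (fun x => G x m n) q - pd m (fun x => G x k n) q)

/-!
Write `v_{ml}` for the covector `(c_{pml})_p` (indices in `1, …, 6`) and `x` for the third row of
`g`. The entries `G_{i1}` are affine, so `c_{1ml}` is constant, and `v_{13} = -e₃`; hence the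
integrability condition with `n = 1`, `k = 3` says exactly that `x` annihilates every `v_{ml}`.
Where `q⁵ ≠ 0` the common annihilator of the `v_{ml}` is contained in the line spanned by
`ω = (2q⁵, q⁶ - q³, 0, 1, 0, 0)`. But `(ωG)₁ = 3q⁵ ≠ 0`, whereas `(xG)₁ = 0` because `xG = e₃`.
So `x = 0`, which is impossible: the condition fails at every point with `q⁵ ≠ 0` and
`det G(q) ≠ 0`.
-/

open Matrix

section PartialDerivative

variable {f g : (Fin 6 → ℝ) → ℝ} {x : Fin 6 → ℝ} (k : Fin 6)

@[simp]
theorem pd_const (c : ℝ) : pd k (fun _ => c) x = 0 := by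
  simp [pd]

@[simp]
theorem pd_apply (i : Fin 6) : pd k (fun y => y i) x = if i = k then 1 else 0 := by
  simp [pd, fderiv_apply, Pi.single_apply]

@[simp]
theorem pd_neg : pd k (fun y => -f y) x = -pd k f x := by
  simp [pd]

@[simp]
theorem pd_add (hf : DifferentiableAt ℝ f x) (hg : DifferentiableAt ℝ g x) :
    pd k (fun y => f y + g y) x = pd k f x + pd k g x := by
  simp [pd, fderiv_fun_add hf hg]

@[simp]
theorem pd_sub (hf : DifferentiableAt ℝ f x) (hg : DifferentiableAt ℝ g x) :
    pd k (fun y => f y - g y) x = pd k f x - pd k g x := by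
  simp [pd, fderiv_fun_sub hf hg]

@[simp]
theorem pd_mul (hf : DifferentiableAt ℝ f x) (hg : DifferentiableAt ℝ g x) :
    pd k (fun y => f y * g y) x = f x * pd k g x + g x * pd k f x := by
  simp [pd, fderiv_fun_mul hf hg]

end PartialDerivative

/-- The covector `(c_{pml})_p`, so that `c^s_{ml}` is the dot product of row `s` of `g` with it. -/
noncomputable def cLowCovector (m l : Fin 6) (q : Fin 6 → ℝ) : Fin 6 → ℝ :=
  fun p => cLow p m l q

section LoweredSymbols

variable (q : Fin 6 → ℝ)

theorem cLowCovector_zero_two : cLowCovector 0 2 q = ![0, 0, -1, 0, 0, 0] := by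
  funext p
  fin_cases p <;> simp (disch := fun_prop) [cLowCovector, cLow, G]
  norm_num

theorem cLowCovector_zero_three : cLowCovector 0 3 q = ![0, 0, 0, 0, -1, 0] := by
  funext p
  fin_cases p <;> simp (disch := fun_prop) [cLowCovector, cLow, G, pow_two]
  norm_num

theorem cLowCovector_three_four : cLowCovector 3 4 q = ![1, 0, 0, -2 * q 4, 2 * q 3, 0] := by
  funext p
  fin_cases p <;> simp (disch := fun_prop) [cLowCovector, cLow, G, pow_two] <;> ring

theorem cLowCovector_three_five : cLowCovector 3 5 q = ![0, 0, q 4, 0, q 5 - q 2, -q 4] := by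
  funext p
  fin_cases p <;> simp (disch := fun_prop) [cLowCovector, cLow, G, pow_two] <;> ring

theorem cLowCovector_four_five : cLowCovector 4 5 q = ![0, -1, q 3, q 5 - q 2, 0, -q 3] := by
  funext p
  fin_cases p <;> simp (disch := fun_prop) [cLowCovector, cLow, G, pow_two] <;> ring

theorem pd_G_zero_right (k i : Fin 6) :
    pd k (fun x => G x i 0) q = pd k (fun x => G x i 0) 0 := by
  fin_cases i <;> simp (disch := fun_prop) [G]

theorem pd_cLow_zero (m l k : Fin 6) : pd k (fun x => cLow 0 m l x) q = 0 := by
  simp only [cLow, pd_G_zero_right, pd_const]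

end LoweredSymbols

/-- The left-hand side `c_{nml,k} + c^s_{ml} c_{snk}` of the integrability condition at `q`. -/
noncomputable def integrabilityDefect (n m l k : Fin 6) (q : Fin 6 → ℝ) : ℝ :=
  pd k (fun x => cLow n m l x) q + ∑ s, (∑ p, ginv q s p * cLow p m l q) * cLow s n k q

theorem integrabilityDefect_zero_two (m l : Fin 6) (q : Fin 6 → ℝ) :
    integrabilityDefect 0 m l 2 q = -(ginv q 2 ⬝ᵥ cLowCovector m l q) := by
  have hc : ∀ s, cLow s 0 2 q = ![0, 0, -1, 0, 0, 0] s := congrFun (cLowCovector_zero_two q)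
  simp [integrabilityDefect, cLowCovector, pd_cLow_zero, hc, Fin.sum_univ_six, dotProduct]

/-- The vector `ω` whose line contains the common annihilator of the covectors `(c_{pml})_p`
where `q⁵ ≠ 0`. -/
def cLowAnnihilator (q : Fin 6 → ℝ) : Fin 6 → ℝ :=
  ![2 * q 4, q 5 - q 2, 0, 1, 0, 0]

theorem eq_smul_cLowAnnihilator {q x : Fin 6 → ℝ} (hq : q 4 ≠ 0)
    (hx : ∀ m l, x ⬝ᵥ cLowCovector m l q = 0) : x = x 3 • cLowAnnihilator q := by
  have h₂ : x 2 = 0 := by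
    simpa [cLowCovector_zero_two, dotProduct, Fin.sum_univ_six] using hx 0 2
  have h₄ : x 4 = 0 := by
    simpa [cLowCovector_zero_three, dotProduct, Fin.sum_univ_six] using hx 0 3
  have h₅ : x 5 = 0 := by
    simpa [cLowCovector_three_five, dotProduct, Fin.sum_univ_six, h₂, h₄, hq] using hx 3 5
  have h₀ : x 0 = x 3 * (2 * q 4) := by
    simpa [cLowCovector_three_four, dotProduct, Fin.sum_univ_six, h₄, add_neg_eq_zero] using hx 3 4
  have h₁ : x 1 = x 3 * (q 5 - q 2) := by
    simpa [cLowCovector_four_five, dotProduct, Fin.sum_univ_six, h₂, h₅, neg_add_eq_zero] using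
      hx 4 5
  funext i
  fin_cases i <;> simp [cLowAnnihilator, h₀, h₁, h₂, h₄, h₅]

theorem cLowAnnihilator_vecMul_G_zero (q : Fin 6 → ℝ) :
    (cLowAnnihilator q ᵥ* G q) 0 = 3 * q 4 := by
  simp [cLowAnnihilator, G, vecMul, dotProduct, Fin.sum_univ_six]
  ring

theorem ginv_row_vecMul_G {q : Fin 6 → ℝ} (hdet : (G q).det ≠ 0) (i : Fin 6) :
    ginv q i ᵥ* G q = Pi.single i 1 := by
  rw [← mul_apply_eq_vecMul, ginv, nonsing_inv_mul _ hdet.isUnit]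
  exact funext fun j => one_eq_pi_single

theorem statement9_general {q : Fin 6 → ℝ} (hq : q 4 ≠ 0) (hdet : (G q).det ≠ 0) :
    ∃ m l, integrabilityDefect 0 m l 2 q ≠ 0 := by
  by_contra! h
  have hrow : ginv q 2 = ginv q 2 3 • cLowAnnihilator q :=
    eq_smul_cLowAnnihilator hq fun m l => by
      simpa [integrabilityDefect_zero_two] using h m l
  have hmul : ginv q 2 3 • (cLowAnnihilator q ᵥ* G q) = Pi.single 2 1 := by
    rw [← smul_vecMul, ← hrow, ginv_row_vecMul_G hdet]
  have hcoeff : ginv q 2 3 = 0 := by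
    simpa [cLowAnnihilator_vecMul_G_zero, hq] using congrFun hmul 0
  simpa [hcoeff] using congrFun hmul 2

theorem det_G_eq_neg_four : (G ![1, 0, 0, 0, 1, 0]).det = -4 := by
  simp [G, det_succ_row_zero, Fin.sum_univ_succ, Fin.succAbove]
  norm_num

/-- the Monge metric of the Oriented Associativity equation does NOT
satisfy the integrability condition `c_{nml,k} + c^s_{ml} c_{snk} = 0` of a local
third-order homogeneous Hamiltonian operator: it fails for some indices at some point
of the open set where `q⁵ ≠ 0` and `det G(q) ≠ 0`. -/
theorem statement9 :
    ∃ (n m l k : Fin 6) (q : Fin 6 → ℝ), q 4 ≠ 0 ∧ (G q).det ≠ 0 ∧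
      pd k (fun x => cLow n m l x) q
        + ∑ s, (∑ p, ginv q s p * cLow p m l q) * cLow s n k q ≠ 0 := by
  have hq : (![1, 0, 0, 0, 1, 0] : Fin 6 → ℝ) 4 ≠ 0 := by simp
  have hdet : (G ![1, 0, 0, 0, 1, 0]).det ≠ 0 := by norm_num [det_G_eq_neg_four]
  obtain ⟨m, l, hdefect⟩ := statement9_general hq hdet
  exact ⟨0, m, l, 2, _, hq, hdet, hdefect⟩
end

section
/- Let G(q) be the Monge metric of the Oriented Associativity equation and let φ : (u¹,…,u⁶) ↦ (q¹,…,q⁶) be the coordinate change q¹ = (1/4)(u¹+u²+u³)² − (u¹u²+u¹u³+u²u³) − (1/4)(u⁶)² − u⁴u⁵; q² = (2u¹u²u³ + (u¹+u²+u³−u⁶)q¹)/(2u⁵); q³ = (1/2)(u¹+u²+u³+u⁶); q⁴ = u⁴; q⁵ = u⁵; q⁶ = (1/2)(u¹+u²+u³−u⁶). Then for every u ∈ ℝ⁶ with u⁵ ≠ 0, the absolute value of the determinant of G(φ(u)) equals ((u¹−u²)(u¹−u³)(u²−u³)u⁵)². In particular, G(φ(u)) is invertible exactly when u¹, u², u³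 are pairwise distinct and u⁵ ≠ 0. -/
/-!
Let `M` be the matrix of multiplication by the second basis vector in the algebra whose structure
constants are encoded by `q`. The Monge metric is the pull-back of the trace form under `ad M`:
`G(q)(v, w) = tr ([M, V] [M, W])`, where `V`, `W` are the variations of `M` in the directions `v`,
`w`. Conjugation by a matrix fixing the first basis vector `e₁` is therefore a linear change of
variables for `G`. When `q⁵ ≠ 0` the vector `e₁` is cyclic for `M`, and passing to the basis
`e₁, M e₁, M² e₁` reduces `M` to a companion matrix; this yields `det G(q) = -(q⁵)² disc χ_M`.
Finally `φ` is built so that `u¹, u², u³` are the eigenvalues of `M` at `φ(u)`.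
-/

open Matrix Polynomial

section Semiconj

variable {n R : Type*} [Fintype n] [DecidableEq n] [CommRing R] {P : GL n R} {A B : Matrix n n R}

theorem eq_mul_mul_inv_of_semiconjBy (h : SemiconjBy (P : Matrix n n R) A B) :
    B = (P : Matrix n n R) * A * ((P⁻¹ : GL n R) : Matrix n n R) :=
  (Units.eq_mul_inv_iff_mul_eq P).mpr h.eq.symm

theorem trace_eq_of_semiconjBy (h : SemiconjBy (P : Matrix n n R) A B) : A.trace = B.trace := by
  rw [eq_mul_mul_inv_of_semiconjBy h, trace_units_conj]

theorem discr_eq_of_semiconjBy (h : SemiconjBy (P : Matrix n n R) A B) : A.discr = B.discr := by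
  rw [eq_mul_mul_inv_of_semiconjBy h, coe_units_inv, discr_conj]

end Semiconj

theorem semiconjBy_lie {S : Type*} [Ring S] {p a b x y : S} (hab : SemiconjBy p a b)
    (hxy : SemiconjBy p x y) : SemiconjBy p ⁅a, x⁆ ⁅b, y⁆ :=
  (hab.mul_right hxy).sub_right (hxy.mul_right hab)

section CubicDiscriminant

variable {R : Type*} [CommRing R]

theorem discr_toPoly {P : Cubic R} (ha : P.a ≠ 0) : P.toPoly.discr = P.discr := by
  rw [Polynomial.discr_of_degree_eq_three (Cubic.degree_of_a_ne_zero ha), Cubic.coeff_eq_a,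
    Cubic.coeff_eq_b, Cubic.coeff_eq_c, Cubic.coeff_eq_d, Cubic.discr]

theorem discr_prod_three_X_sub_C (x y z : R) :
    ((X - C x) * (X - C y) * (X - C z)).discr = ((x - y) * (x - z) * (y - z)) ^ 2 := by
  nontriviality R
  rw [Cubic.prod_X_sub_C_eq, discr_toPoly one_ne_zero, Cubic.discr]
  ring

end CubicDiscriminant

/-- The matrix of multiplication by `e₂` in the basis `e₁, e₂, e₃` of the algebra with unit `e₁`
defined by `q`: `e₂ e₂ = q¹ e₁ + q³ e₂ + q⁵ e₃` and `e₂ e₃ = q² e₁ + q⁴ e₂ + q⁶ e₃`. -/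
def mulMatrix (q : Fin 6 → ℝ) : Matrix (Fin 3) (Fin 3) ℝ :=
  !![0, q 0, q 1;
     1, q 2, q 3;
     0, q 4, q 5]

/-- The derivative of the affine map `mulMatrix` in the direction `v`. -/
def mulMatrixVariation (v : Fin 6 → ℝ) : Matrix (Fin 3) (Fin 3) ℝ :=
  !![0, v 0, v 1;
     0, v 2, v 3;
     0, v 4, v 5]

theorem toBilin'_G (q v w : Fin 6 → ℝ) :
    (G q).toBilin' v w = trace (⁅mulMatrix q, mulMatrixVariation v⁆ *
      ⁅mulMatrix q, mulMatrixVariation w⁆) := by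
  simp only [toBilin'_apply, G, mulMatrix, mulMatrixVariation, Ring.lie_def, trace_fin_three,
    mul_apply, Matrix.sub_apply, Fin.sum_univ_three, Fin.sum_univ_six, of_apply, cons_val',
    cons_val]
  ring

theorem G_eq_transpose_mul_mul {q q' : Fin 6 → ℝ} {P : GL (Fin 3) ℝ}
    {T : Matrix (Fin 6) (Fin 6) ℝ}
    (hP : SemiconjBy (P : Matrix (Fin 3) (Fin 3) ℝ) (mulMatrix q') (mulMatrix q))
    (hT : ∀ v, SemiconjBy (P : Matrix (Fin 3) (Fin 3) ℝ) (mulMatrixVariation (T *ᵥ v))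
      (mulMatrixVariation v)) :
    G q = Tᵀ * G q' * T := by
  apply toBilin'.injective
  rw [← toBilin'_comp]
  refine LinearMap.ext₂ fun v w => ?_
  have hlie v := semiconjBy_lie hP (hT v)
  simp only [LinearMap.BilinForm.comp_apply, toLin'_apply, toBilin'_G]
  exact (trace_eq_of_semiconjBy ((hlie v).mul_right (hlie w))).symm

theorem charpoly_mulMatrix (q : Fin 6 → ℝ) : (mulMatrix q).charpoly =
    Cubic.toPoly ⟨1, -(q 2 + q 5), q 2 * q 5 - q 0 - q 3 * q 4, q 0 * q 5 - q 1 * q 4⟩ := by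
  simp only [charpoly, charmatrix_apply, diagonal_apply, mulMatrix, det_fin_three, of_apply,
    cons_val', cons_val, Fin.reduceEq, if_true, if_false, Cubic.toPoly, map_zero, map_one, map_add,
    map_sub, map_mul, map_neg]
  ring

theorem charpoly_mulMatrix_phi {u : Fin 6 → ℝ} (hu : u 4 ≠ 0) :
    (mulMatrix (phi u)).charpoly = (X - C (u 0)) * (X - C (u 1)) * (X - C (u 2)) := by
  rw [charpoly_mulMatrix, Cubic.prod_X_sub_C_eq]
  congr 2 <;> simp only [phi, cons_val]
  · ring
  · ring
  · field_simp
    ring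

/-- The matrix with columns `e₁, M e₁, M² e₁`, where `M = mulMatrix q`: the change of basis that
brings `M` to companion form. -/
def krylovMatrix (q : Fin 6 → ℝ) : Matrix (Fin 3) (Fin 3) ℝ :=
  !![1, 0, q 0;
     0, 1, q 2;
     0, 0, q 4]

theorem det_krylovMatrix (q : Fin 6 → ℝ) : (krylovMatrix q).det = q 4 := by
  simp [krylovMatrix, det_fin_three]

/-- The point at which `mulMatrix` takes as its value the companion matrix of the characteristic
polynomial of `mulMatrix q`. -/
def companionPoint (q : Fin 6 → ℝ) : Fin 6 → ℝ :=
  ![0, q 1 * q 4 - q 0 * q 5, 0, q 0 + q 3 * q 4 - q 2 * q 5, 1, q 2 + q 5]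

theorem semiconjBy_krylovMatrix (q : Fin 6 → ℝ) :
    SemiconjBy (krylovMatrix q) (mulMatrix (companionPoint q)) (mulMatrix q) := by
  ext i j
  fin_cases i <;> fin_cases j <;>
    simp only [krylovMatrix, mulMatrix, companionPoint, mul_apply, Fin.sum_univ_three, of_apply,
      cons_val', Fin.zero_eta, Fin.mk_one, Fin.reduceFinMk, cons_val] <;>
    ring

theorem det_G_companionPoint (q : Fin 6 → ℝ) :
    (G (companionPoint q)).det = -(mulMatrix (companionPoint q)).discr := by
  rw [Matrix.discr, charpoly_mulMatrix, discr_toPoly one_ne_zero, Cubic.discr]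
  simp [G, companionPoint, det_succ_row_zero, Fin.sum_univ_succ, Fin.succAbove]
  ring

/-- The matrix of the linear map `V ↦ P⁻¹ V P` on variations of `mulMatrix`, in the coordinates of
`mulMatrixVariation`, where `P = krylovMatrix q`. It is meant for `q 4 ≠ 0`, when `P` is
invertible. -/
noncomputable def krylovTransition (q : Fin 6 → ℝ) : Matrix (Fin 6) (Fin 6) ℝ :=
  !![1, 0, 0, 0, -q 0 / q 4, 0;
     q 2, q 4, 0, 0, -q 0 * q 2 / q 4, -q 0;
     0, 0, 1, 0, -q 2 / q 4, 0;
     0, 0, q 2, q 4, -q 2 ^ 2 / q 4, -q 2;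
     0, 0, 0, 0, 1 / q 4, 0;
     0, 0, 0, 0, q 2 / q 4, 1]

theorem det_krylovTransition {q : Fin 6 → ℝ} (hq : q 4 ≠ 0) : (krylovTransition q).det = q 4 := by
  simp [krylovTransition, det_succ_row_zero, Fin.sum_univ_succ, Fin.succAbove, hq]

theorem semiconjBy_krylovTransition {q : Fin 6 → ℝ} (hq : q 4 ≠ 0) (v : Fin 6 → ℝ) :
    SemiconjBy (krylovMatrix q) (mulMatrixVariation (krylovTransition q *ᵥ v))
      (mulMatrixVariation v) := by
  ext i j
  fin_cases i <;> fin_cases j <;>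
    simp only [krylovMatrix, mulMatrixVariation, krylovTransition, mul_apply, mulVec, dotProduct,
      Fin.sum_univ_three, Fin.sum_univ_six, of_apply, cons_val', Fin.zero_eta, Fin.mk_one,
      Fin.reduceFinMk, cons_val] <;>
    field_simp <;>
    ring

theorem det_G {q : Fin 6 → ℝ} (hq : q 4 ≠ 0) :
    (G q).det = -(q 4 ^ 2 * (mulMatrix q).discr) := by
  let P : GL (Fin 3) ℝ :=
    .mkOfDetNeZero (krylovMatrix q) (by rwa [det_krylovMatrix])
  have hP : SemiconjBy (P : Matrix (Fin 3) (Fin 3) ℝ) _ _ := semiconjBy_krylovMatrix q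
  rw [G_eq_transpose_mul_mul hP (semiconjBy_krylovTransition hq), det_mul, det_mul, det_transpose,
    det_krylovTransition hq, det_G_companionPoint, discr_eq_of_semiconjBy hP]
  ring

theorem det_G_phi {u : Fin 6 → ℝ} (hu : u 4 ≠ 0) :
    (G (phi u)).det = -((u 0 - u 1) * (u 0 - u 2) * (u 1 - u 2) * u 4) ^ 2 := by
  have hphi : phi u 4 = u 4 := rfl
  rw [det_G (hphi ▸ hu), hphi, Matrix.discr, charpoly_mulMatrix_phi hu, discr_prod_three_X_sub_C]
  ring

/-- for every `u` with `u⁵ ≠ 0`, the absolute value of `det G(φ(u))` is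
`((u¹−u²)(u¹−u³)(u²−u³)u⁵)²`; in particular `G(φ(u))` is invertible exactly when
`u¹, u², u³` are pairwise distinct and `u⁵ ≠ 0`. -/
theorem statement11 :
    ∀ u : Fin 6 → ℝ, u 4 ≠ 0 →
      |(G (phi u)).det| = ((u 0 - u 1) * (u 0 - u 2) * (u 1 - u 2) * u 4) ^ 2 ∧
      (IsUnit (G (phi u)) ↔ (u 0 ≠ u 1 ∧ u 0 ≠ u 2 ∧ u 1 ≠ u 2) ∧ u 4 ≠ 0) := by
  intro u hu
  have hdet := det_G_phi hu
  constructor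
  · rw [hdet, abs_neg, abs_of_nonneg (sq_nonneg _)]
  · rw [isUnit_iff_isUnit_det, isUnit_iff_ne_zero, hdet]
    simp [sub_eq_zero, hu, and_assoc]
end
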